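/- arXiv:math/0603112 — 3 statements merged into one kernel-verified Lean document; each statement's English description precedes it below -/
import Mathlib

section
/- There exists a constant C > 0 such that for every x ≥ 1, |J₀(x) − √(2/π) · cos(x − π/4)/√x| ≤ C x^{−3/2}. -/
/-- The Bessel function of order zero, defined by its power series. -/
noncomputable def J0 (x : ℝ) : ℝ :=
  ∑' j : ℕ, ((-1 : ℝ) ^ j / ((Nat.factorial j : ℝ)) ^ 2) * (x / 2) ^ (2 * j)

/-!
With `t = cos θ`, Poisson's integral reads `π / 2 * J₀ x = ∫₀¹ cos (x t) / √(1 - t²) dt`. Moving the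
contour of `e^{ixz} (1 - z²)^{-1/2}` from `[0, 1]` into the upper half-plane replaces it by the
vertical half-lines over `0` and `1`. On the first the integrand is real, so it drops out on taking
real parts. On the second, `z = 1 + iy`, the factor `e^{-xy}` localises at `y = 0`, and expanding
`(1 + iy/2)^{-1/2} = 1 + O(y)` there gives the leading term and the error, as in Watson's lemma.
-/

open Complex (I)
open Filter MeasureTheory Set Topology
open scoped Interval Real

theorem integral_cos_pow_even (n : ℕ) :
    ∫ θ in 0..π, Real.cos θ ^ (2 * n) =
      π * ((2 * n).factorial / (4 ^ n * (n.factorial : ℝ) ^ 2)) := by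
  have wallis_product : ∏ i ∈ Finset.range n, ((2 * (i : ℝ) + 1) / (2 * i + 2)) =
      (2 * n).factorial / (4 ^ n * (n.factorial : ℝ) ^ 2) := by
    induction n with
    | zero => simp
    | succ k ih =>
      rw [Finset.prod_range_succ, ih, Nat.mul_succ]
      simp only [Nat.factorial_succ]
      push_cast
      field_simp
      ring
  have sin_pow_periodic : Function.Periodic (fun θ ↦ Real.sin θ ^ (2 * n)) π := fun θ ↦ by
    simp only [Real.sin_add_pi, (even_two_mul n).neg_pow]
  calc ∫ θ in 0..π, Real.cos θ ^ (2 * n)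
    _ = ∫ θ in 0..π, Real.sin (θ + π / 2) ^ (2 * n) := by simp only [Real.sin_add_pi_div_two]
    _ = ∫ θ in 0..π, Real.sin θ ^ (2 * n) := by
      rw [intervalIntegral.integral_comp_add_right (fun θ ↦ Real.sin θ ^ (2 * n)), add_comm π]
      simpa using sin_pow_periodic.intervalIntegral_add_eq (0 + π / 2) 0
    _ = π * ((2 * n).factorial / (4 ^ n * (n.factorial : ℝ) ^ 2)) := by
      rw [integral_sin_pow_even, wallis_product]

theorem integral_cos_mul_cos_eq_pi_mul_J0 (x : ℝ) :
    ∫ θ in 0..π, Real.cos (x * Real.cos θ) = π * J0 x := by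
  have hasSum_integral : HasSum
      (fun j : ℕ ↦ ∫ θ in 0..π, (-1) ^ j * (x * Real.cos θ) ^ (2 * j) / (2 * j).factorial)
      (∫ θ in 0..π, Real.cos (x * Real.cos θ)) := by
    refine intervalIntegral.hasSum_integral_of_dominated_convergence
      (fun j _ ↦ |x| ^ (2 * j) / (2 * j).factorial)
      (fun j ↦ (by fun_prop : Continuous _).aestronglyMeasurable) (fun j ↦ ?_)
      (.of_forall fun _ _ ↦ (Real.hasSum_cosh |x|).summable) intervalIntegrable_const
      (.of_forall fun _ _ ↦ Real.hasSum_cos _)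
    refine .of_forall fun θ _ ↦ ?_
    simp only [norm_div, norm_mul, norm_pow, norm_neg, norm_one, one_pow, one_mul,
      Real.norm_eq_abs, Nat.abs_cast]
    gcongr
    exact mul_le_of_le_one_right (abs_nonneg x) (Real.abs_cos_le_one θ)
  rw [← hasSum_integral.tsum_eq, J0, ← tsum_mul_left]
  refine tsum_congr fun j ↦ ?_
  simp only [mul_pow, mul_div_right_comm _ _ ((2 * j).factorial : ℝ), ← mul_assoc,
    intervalIntegral.integral_const_mul, integral_cos_pow_even]
  rw [div_pow, pow_mul 2 2 j, show (2 : ℝ) ^ 2 = 4 by norm_num]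
  field_simp

theorem intervalIntegrable_cos_mul_inv_sqrt (x : ℝ) :
    IntervalIntegrable (fun t ↦ Real.cos (x * t) * √(1 - t ^ 2)⁻¹) volume (-1) 1 :=
  Polynomial.Chebyshev.intervalIntegrable_sqrt_one_sub_sq_inv.continuousOn_mul (by fun_prop)

theorem integral_cos_mul_inv_sqrt_eq_pi_div_two_mul_J0 (x : ℝ) :
    ∫ t in 0..1, Real.cos (x * t) * √(1 - t ^ 2)⁻¹ = π / 2 * J0 x := by
  have full_interval : ∫ t in -1..1, Real.cos (x * t) * √(1 - t ^ 2)⁻¹ = π * J0 x := by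
    rw [← Polynomial.Chebyshev.integral_measureT fun t ↦ Real.cos (x * t),
      Polynomial.Chebyshev.integral_measureT_eq_integral_cos, integral_cos_mul_cos_eq_pi_mul_J0]
  have integrable := intervalIntegrable_cos_mul_inv_sqrt x
  have left_eq_right : ∫ t in -1..0, Real.cos (x * t) * √(1 - t ^ 2)⁻¹ =
      ∫ t in 0..1, Real.cos (x * t) * √(1 - t ^ 2)⁻¹ := by
    have reflection := intervalIntegral.integral_comp_neg (a := 0) (b := 1)
      fun t ↦ Real.cos (x * t) * √(1 - t ^ 2)⁻¹
    simpa only [mul_neg, Real.cos_neg, neg_sq, neg_zero] using reflection.symm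
  have zero_mem : (0 : ℝ) ∈ [[-1, 1]] := by simp
  rw [← intervalIntegral.integral_add_adjacent_intervals
    (integrable.mono_set (uIcc_subset_uIcc_left zero_mem))
    (integrable.mono_set (uIcc_subset_uIcc_right zero_mem)), left_eq_right] at full_interval
  linarith

theorem integral_boundary_halfStrip_eq_zero {E : Type*} [NormedAddCommGroup E] [NormedSpace ℂ E]
    {f : ℂ → E} {a b c : ℝ} (hf : DifferentiableOn ℂ f ([[a, b]] ×ℂ Ici c))
    (ha : IntegrableOn (fun y : ℝ ↦ f (a + y * I)) (Ioi c))
    (hb : IntegrableOn (fun y : ℝ ↦ f (b + y * I)) (Ioi c))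
    (hlim : Tendsto (fun T : ℝ ↦ ∫ t : ℝ in a..b, f (t + T * I)) atTop (𝓝 0)) :
    (∫ t : ℝ in a..b, f (t + c * I)) + I • (∫ y : ℝ in Ioi c, f (b + y * I)) -
      I • (∫ y : ℝ in Ioi c, f (a + y * I)) = 0 := by
  have rect (T : ℝ) (hT : c ≤ T) : (∫ t : ℝ in a..b, f (t + c * I)) -
      (∫ t : ℝ in a..b, f (t + T * I)) + I • (∫ y : ℝ in c..T, f (b + y * I)) -
      I • (∫ y : ℝ in c..T, f (a + y * I)) = 0 := by
    simpa using Complex.integral_boundary_rect_eq_zero_of_differentiableOn f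
      (a + c * I) (b + T * I) (hf.mono (by
        simpa [uIcc_of_le hT] using Complex.reProdIm_subset_iff.2
          (prod_mono_right Icc_subset_Ici_self)))
  have limit := ((tendsto_const_nhds (x := ∫ t : ℝ in a..b, f (t + c * I))).sub hlim).add
    ((intervalIntegral_tendsto_integral_Ioi c hb tendsto_id).const_smul I) |>.sub
    ((intervalIntegral_tendsto_integral_Ioi c ha tendsto_id).const_smul I)
  rw [sub_zero] at limit
  exact tendsto_nhds_unique limit (tendsto_const_nhds.congr'
    ((eventually_ge_atTop c).mono fun T hT ↦ (rect T hT).symm))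

theorem ofReal_mul_cpow {r : ℝ} (hr : 0 < r) {w : ℂ} (hw : w ≠ 0) (a : ℂ) :
    (r * w) ^ a = r ^ a * w ^ a := by
  have hr' : (r : ℂ) ≠ 0 := Complex.ofReal_ne_zero.2 hr.ne'
  rw [Complex.cpow_def_of_ne_zero (mul_ne_zero hr' hw), Complex.log_ofReal_mul hr hw, add_mul,
    Complex.exp_add, Complex.cpow_def_of_ne_zero hr', Complex.cpow_def_of_ne_zero hw,
    Complex.ofReal_log hr.le]

theorem neg_I_mul_cpow {w : ℂ} (hw : w ≠ 0) (harg : -(π / 2) < w.arg) (a : ℂ) :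
    (-I * w) ^ a = Complex.exp (-(π / 2) * I * a) * w ^ a := by
  have hlog : Complex.log (-I * w) = Complex.log (-I) + Complex.log w := by
    rw [Complex.log_mul_eq_add_log_iff (by simp) hw, Complex.arg_neg_I]
    constructor <;> linarith [Complex.arg_le_pi w, Real.pi_pos]
  rw [Complex.cpow_def_of_ne_zero (by simp [hw]), hlog, add_mul, Complex.exp_add,
    Complex.log_neg_I, Complex.cpow_def_of_ne_zero hw]

theorem norm_one_add_cpow_sub_one_le {a : ℝ} (ha : a ≤ 1) {w : ℂ} (hw : 0 ≤ w.re) :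
    ‖(1 + w) ^ (a : ℂ) - 1‖ ≤ |a| * ‖w‖ := by
  have hderiv (z : ℂ) (hz : 0 ≤ z.re) :
      HasDerivAt (fun z : ℂ ↦ (1 + z) ^ (a : ℂ)) (a * (1 + z) ^ ((a - 1 : ℝ) : ℂ)) z := by
    have mem_slitPlane : 1 + z ∈ Complex.slitPlane := .inl (by simpa using by linarith)
    simpa using ((hasDerivAt_id z).const_add 1).cpow_const mem_slitPlane
  have hbound (z : ℂ) (hz : 0 ≤ z.re) : ‖(a * (1 + z) ^ ((a - 1 : ℝ) : ℂ) : ℂ)‖ ≤ |a| := by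
    have one_le_norm : 1 ≤ ‖1 + z‖ := by
      simpa using (by simpa using hz : (1 : ℝ) ≤ (1 + z).re).trans (Complex.re_le_norm _)
    rw [norm_mul, Complex.norm_cpow_real, Complex.norm_real, Real.norm_eq_abs]
    exact mul_le_of_le_one_right (abs_nonneg a)
      (Real.rpow_le_one_of_one_le_of_nonpos one_le_norm (by linarith))
  have convex_halfPlane : Convex ℝ {z : ℂ | 0 ≤ z.re} := convex_halfSpace_re_ge 0
  have zero_mem : (0 : ℂ) ∈ {z : ℂ | 0 ≤ z.re} := le_refl (0 : ℝ)
  simpa using convex_halfPlane.norm_image_sub_le_of_norm_hasDerivWithin_le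
    (fun z hz ↦ (hderiv z hz).hasDerivWithinAt) hbound zero_mem hw

theorem integrableOn_rpow_mul_exp_neg_mul {a x : ℝ} (ha : 0 < a) (hx : 0 < x) :
    IntegrableOn (fun y : ℝ ↦ y ^ (a - 1) * Real.exp (-(x * y))) (Ioi 0) := by
  refine .of_integral_ne_zero ?_
  rw [Real.integral_rpow_mul_exp_neg_mul_Ioi ha hx]
  exact (mul_pos (by positivity) (Real.Gamma_pos_of_pos ha)).ne'

theorem norm_integral_rpow_mul_exp_smul_sub_le {E : Type*} [NormedAddCommGroup E]
    [NormedSpace ℝ E] [CompleteSpace E] {φ : ℝ → E} {c : E} {a x L : ℝ} (ha : 0 < a) (hx : 0 < x)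
    (hφ : AEStronglyMeasurable φ (volume.restrict (Ioi 0)))
    (hL : ∀ y > 0, ‖φ y - c‖ ≤ L * y) :
    ‖(∫ y in Ioi 0, (y ^ (a - 1) * Real.exp (-(x * y))) • φ y) -
        ((1 / x) ^ a * Real.Gamma a) • c‖ ≤
      L * ((1 / x) ^ (a + 1) * Real.Gamma (a + 1)) := by
  set k : ℝ → ℝ := fun y ↦ y ^ (a - 1) * Real.exp (-(x * y)) with hk
  have hk_int : IntegrableOn k (Ioi 0) := integrableOn_rpow_mul_exp_neg_mul ha hx
  have hK_int := (integrableOn_rpow_mul_exp_neg_mul (by linarith : 0 < a + 1) hx).const_mul L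
  have hbound : ∀ᵐ y ∂volume.restrict (Ioi 0),
      ‖k y • (φ y - c)‖ ≤ L * (y ^ (a + 1 - 1) * Real.exp (-(x * y))) := by
    refine (ae_restrict_iff' measurableSet_Ioi).2 (.of_forall fun y (hy : 0 < y) ↦ ?_)
    calc ‖k y • (φ y - c)‖ = k y * ‖φ y - c‖ := by
          rw [norm_smul, Real.norm_of_nonneg (by positivity)]
      _ ≤ k y * (L * y) := by gcongr; exact hL y hy
      _ = L * (y ^ (a + 1 - 1) * Real.exp (-(x * y))) := by
          rw [add_sub_right_comm, Real.rpow_add_one hy.ne']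
          ring
  have hdiff_int : IntegrableOn (fun y ↦ k y • (φ y - c)) (Ioi 0) :=
    hK_int.mono' (hk_int.aestronglyMeasurable.smul (hφ.sub aestronglyMeasurable_const)) hbound
  have hsplit : (∫ y in Ioi 0, k y • φ y) =
      (∫ y in Ioi 0, k y • (φ y - c)) + ((1 / x) ^ a * Real.Gamma a) • c := by
    rw [← Real.integral_rpow_mul_exp_neg_mul_Ioi ha hx, ← integral_smul_const,
      ← integral_add hdiff_int (hk_int.smul_const c)]
    simp only [smul_sub, hk, sub_add_cancel]
  rw [hsplit, add_sub_cancel_right,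
    ← Real.integral_rpow_mul_exp_neg_mul_Ioi (by linarith) hx, ← integral_const_mul]
  exact norm_integral_le_of_norm_le hK_int hbound

/-- The integrand of the complexified Poisson integral `∫ e^{ixz} (1 - z²)^{-1/2} dz` for `J0`,
with the principal branch of the power. -/
noncomputable def poissonIntegrand (x : ℝ) (z : ℂ) : ℂ :=
  Complex.exp (x * z * I) * (1 - z ^ 2) ^ ((-1 / 2 : ℝ) : ℂ)

namespace poissonIntegrand

theorem differentiableAt (x : ℝ) {z : ℂ} (hz : z.re ^ 2 < 1 + z.im ^ 2) :
    DifferentiableAt ℂ (poissonIntegrand x) z := by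
  have re_eq : (1 - z ^ 2).re = 1 - z.re ^ 2 + z.im ^ 2 := by
    simp only [sq, Complex.sub_re, Complex.one_re, Complex.mul_re]
    ring
  have mem_slitPlane : 1 - z ^ 2 ∈ Complex.slitPlane := .inl (by linarith)
  unfold poissonIntegrand
  fun_prop (disch := assumption)

theorem norm_le (x : ℝ) {z : ℂ} (hre : 0 ≤ z.re) (him : 0 < z.im) :
    ‖poissonIntegrand x z‖ ≤ z.im ^ ((1 / 2 : ℝ) - 1) * Real.exp (-(x * z.im)) := by
  have norm_exp : ‖Complex.exp (x * z * I)‖ = Real.exp (-(x * z.im)) := by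
    simp [Complex.norm_exp]
  have im_le_norm : z.im ≤ ‖1 - z ^ 2‖ :=
    calc z.im ≤ ‖1 - z‖ := by
          simpa [abs_of_pos him] using Complex.abs_im_le_norm (1 - z)
      _ ≤ ‖1 - z‖ * ‖1 + z‖ := le_mul_of_one_le_right (norm_nonneg _) <| by
          have re_le_norm := Complex.re_le_norm (1 + z)
          rw [Complex.add_re, Complex.one_re] at re_le_norm
          linarith
      _ = ‖1 - z ^ 2‖ := by rw [← norm_mul]; ring_nf
  rw [poissonIntegrand, norm_mul, norm_exp, Complex.norm_cpow_real, mul_comm]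
  have exponent_eq : (1 / 2 : ℝ) - 1 = -1 / 2 := by norm_num
  rw [exponent_eq]
  gcongr ?_ * _
  exact Real.rpow_le_rpow_of_nonpos him im_le_norm (by norm_num)

theorem apply_ofReal (x : ℝ) {t : ℝ} (ht : t ^ 2 ≤ 1) :
    poissonIntegrand x t = Complex.exp ((x * t : ℝ) * I) * (√(1 - t ^ 2)⁻¹ : ℝ) := by
  have hbase : 0 ≤ 1 - t ^ 2 := sub_nonneg.2 ht
  rw [Real.sqrt_eq_rpow, Real.inv_rpow hbase, ← Real.rpow_neg hbase, ← neg_div,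
    Complex.ofReal_cpow hbase, poissonIntegrand]
  push_cast
  rfl

theorem apply_mul_I (x y : ℝ) :
    poissonIntegrand x (y * I) = (Real.exp (-(x * y)) * (1 + y ^ 2) ^ (-1 / 2 : ℝ) : ℝ) := by
  rw [poissonIntegrand, Complex.ofReal_mul, Complex.ofReal_cpow (by positivity), mul_pow,
    Complex.I_sq, Complex.ofReal_exp, ← mul_assoc, mul_assoc, Complex.I_mul_I]
  push_cast
  ring_nf

theorem integrableOn_vertical {x s : ℝ} (hx : 0 < x) (hs : s ∈ Icc 0 1) :
    IntegrableOn (fun y : ℝ ↦ poissonIntegrand x (s + y * I)) (Ioi 0) := by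
  have continuousOn : ContinuousOn (fun y : ℝ ↦ poissonIntegrand x (s + y * I)) (Ioi 0) := by
    intro y hy
    have sq_lt : s ^ 2 < 1 + y ^ 2 := by nlinarith [hs.1, hs.2, pow_pos (mem_Ioi.1 hy) 2]
    have hdiff := differentiableAt x (z := s + y * I) (by simpa using sq_lt)
    exact (hdiff.continuousAt.comp
      (f := fun y : ℝ ↦ (s + y * I : ℂ)) (by fun_prop)).continuousWithinAt
  refine (integrableOn_rpow_mul_exp_neg_mul one_half_pos hx).mono'
    (continuousOn.aestronglyMeasurable measurableSet_Ioi) ?_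
  refine (ae_restrict_iff' measurableSet_Ioi).2 (.of_forall fun y hy ↦ ?_)
  simpa using norm_le x (z := s + y * I) (by simpa using hs.1) (by simpa using hy)

theorem tendsto_integral_vertical {x : ℝ} (hx : 0 < x) :
    Tendsto (fun s : ℝ ↦ ∫ y in Ioi (0 : ℝ), poissonIntegrand x (s + y * I))
      (𝓝[<] 1) (𝓝 (∫ y in Ioi (0 : ℝ), poissonIntegrand x (1 + y * I))) := by
  have strip : ∀ᶠ s in 𝓝[<] (1 : ℝ), s ∈ Ico (0 : ℝ) 1 := Ico_mem_nhdsLT one_pos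
  refine tendsto_integral_filter_of_dominated_convergence _
    (strip.mono fun s hs ↦ (integrableOn_vertical hx ⟨hs.1, hs.2.le⟩).aestronglyMeasurable)
    (strip.mono fun s hs ↦ (ae_restrict_iff' measurableSet_Ioi).2 (.of_forall fun y hy ↦ ?_))
    (integrableOn_rpow_mul_exp_neg_mul one_half_pos hx)
    ((ae_restrict_iff' measurableSet_Ioi).2 (.of_forall fun y hy ↦ ?_))
  · simpa using norm_le x (z := s + y * I) (by simpa using hs.1) (by simpa using hy)
  · have hdiff := differentiableAt x (z := (1 : ℝ) + y * I)
      (by simpa using pow_pos (mem_Ioi.1 hy) 2)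
    have hcont := hdiff.continuousAt.comp
      (f := fun s : ℝ ↦ (s + y * I : ℂ)) (x := 1) (by fun_prop)
    simpa [Function.comp_def] using hcont.tendsto.mono_left nhdsWithin_le_nhds

theorem tendsto_integral_horizontal {x s : ℝ} (hx : 0 < x) (hs : 0 ≤ s) :
    Tendsto (fun T : ℝ ↦ ∫ t : ℝ in 0..s, poissonIntegrand x (t + T * I)) atTop (𝓝 0) := by
  have bound (T : ℝ) (hT : 1 ≤ T) :
      ‖∫ t : ℝ in 0..s, poissonIntegrand x (t + T * I)‖ ≤ Real.exp (-(x * T)) * |s - 0| := by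
    refine intervalIntegral.norm_integral_le_of_norm_le_const fun t ht ↦ ?_
    rw [uIoc_of_le hs] at ht
    refine (norm_le x (by simpa using ht.1.le) (by simpa using by linarith)).trans ?_
    have rpow_le_one : T ^ ((1 / 2 : ℝ) - 1) ≤ 1 :=
      Real.rpow_le_one_of_one_le_of_nonpos hT (by norm_num)
    simpa using mul_le_of_le_one_left (Real.exp_nonneg (-(x * T))) rpow_le_one
  have exp_tendsto : Tendsto (fun T : ℝ ↦ Real.exp (-(x * T)) * |s - 0|) atTop (𝓝 0) := by
    simpa using (Real.tendsto_exp_neg_atTop_nhds_zero.comp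
      (tendsto_id.const_mul_atTop hx)).mul_const |s - 0|
  exact squeeze_zero_norm' ((eventually_ge_atTop 1).mono bound) exp_tendsto

theorem re_apply_ofReal (x : ℝ) {t : ℝ} (ht : t ^ 2 ≤ 1) :
    (poissonIntegrand x t).re = Real.cos (x * t) * √(1 - t ^ 2)⁻¹ := by
  rw [apply_ofReal x ht, Complex.re_mul_ofReal, Complex.exp_ofReal_mul_I_re]

-- The singularity `z = 1` is a corner of the half-strip over `[0, 1]`; Cauchy's theorem is applied
-- over `[0, s]` and then `s → 1`.
theorem integral_cos_mul_inv_sqrt_eq_im_of_lt_one {x s : ℝ} (hx : 0 < x) (hs : s ∈ Ico 0 1) :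
    ∫ t in 0..s, Real.cos (x * t) * √(1 - t ^ 2)⁻¹ =
      (∫ y in Ioi (0 : ℝ), poissonIntegrand x (s + y * I)).im := by
  have sq_lt_one {t : ℝ} (ht : t ∈ Icc 0 s) : t ^ 2 < 1 := by nlinarith [ht.1, ht.2, hs.2]
  have cauchy := integral_boundary_halfStrip_eq_zero (f := poissonIntegrand x) (a := 0) (b := s)
    (c := 0) (fun z hz ↦ (differentiableAt x (by
      rw [uIcc_of_le hs.1] at hz
      linarith [sq_lt_one hz.1, sq_nonneg z.im])).differentiableWithinAt)
    (integrableOn_vertical hx (by simp)) (integrableOn_vertical hx ⟨hs.1, hs.2.le⟩)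
    (tendsto_integral_horizontal hx hs.1)
  have continuousOn : ContinuousOn (fun t : ℝ ↦ poissonIntegrand x t) [[0, s]] := fun t ht ↦
    ((differentiableAt x (by simpa using sq_lt_one (uIcc_of_le hs.1 ▸ ht))).continuousAt.comp
      (f := ((↑) : ℝ → ℂ)) (by fun_prop)).continuousWithinAt
  have bottom : (∫ t : ℝ in 0..s, poissonIntegrand x t).re =
      ∫ t in 0..s, Real.cos (x * t) * √(1 - t ^ 2)⁻¹ := by
    refine (Complex.reCLM.intervalIntegral_comp_comm continuousOn.intervalIntegrable).symm.trans ?_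
    exact intervalIntegral.integral_congr fun t ht ↦
      re_apply_ofReal x (sq_lt_one (uIcc_of_le hs.1 ▸ ht)).le
  have left_real : (∫ y in Ioi (0 : ℝ), poissonIntegrand x (y * I)).im = 0 := by
    simp only [apply_mul_I, integral_complex_ofReal, Complex.ofReal_im]
  have cauchy_re := congrArg Complex.re cauchy
  simp only [Complex.ofReal_zero, zero_mul, add_zero, zero_add, smul_eq_mul, Complex.sub_re,
    Complex.add_re, Complex.I_mul_re, Complex.zero_re, bottom, left_real] at cauchy_re
  linarith

theorem integral_cos_mul_inv_sqrt_eq_im {x : ℝ} (hx : 0 < x) :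
    ∫ t in 0..1, Real.cos (x * t) * √(1 - t ^ 2)⁻¹ =
      (∫ y in Ioi (0 : ℝ), poissonIntegrand x (1 + y * I)).im := by
  have integrable : IntervalIntegrable (fun t ↦ Real.cos (x * t) * √(1 - t ^ 2)⁻¹) volume 0 1 :=
    (intervalIntegrable_cos_mul_inv_sqrt x).mono_set (uIcc_subset_uIcc_right (by simp))
  have lhs_tendsto : Tendsto (fun s : ℝ ↦ ∫ t in 0..s, Real.cos (x * t) * √(1 - t ^ 2)⁻¹)
      (𝓝[<] 1) (𝓝 (∫ t in 0..1, Real.cos (x * t) * √(1 - t ^ 2)⁻¹)) := by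
    have primitive := intervalIntegral.continuousOn_primitive_interval' integrable left_mem_uIcc
    rw [uIcc_of_le zero_le_one] at primitive
    exact (primitive 1 (right_mem_Icc.2 zero_le_one)).mono_of_mem_nhdsWithin
      (Icc_mem_nhdsLT one_pos)
  refine tendsto_nhds_unique (lhs_tendsto.congr' ?_)
    ((Complex.continuous_im.tendsto _).comp (tendsto_integral_vertical hx))
  filter_upwards [Ico_mem_nhdsLT one_pos] with s hs
  exact integral_cos_mul_inv_sqrt_eq_im_of_lt_one hx hs

theorem apply_one_add_mul_I (x : ℝ) {y : ℝ} (hy : 0 < y) :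
    poissonIntegrand x (1 + y * I) =
      (√2⁻¹ : ℝ) * Complex.exp ((x + π / 4 : ℝ) * I) *
        ((y ^ ((1 / 2 : ℝ) - 1) * Real.exp (-(x * y))) •
          (1 + y / 2 * I) ^ ((-1 / 2 : ℝ) : ℂ)) := by
  have factor : 1 - (1 + y * I) ^ 2 = (2 * y : ℝ) * (-I * (1 + y / 2 * I)) := by
    push_cast
    ring
  have ne_zero : 1 + y / 2 * I ≠ 0 := fun h ↦ by simpa using congrArg Complex.re h
  have arg_gt : -(π / 2) < (1 + y / 2 * I).arg :=
    (abs_lt.1 (Complex.abs_arg_lt_pi_div_two_iff.2 (.inl (by simp)))).1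
  have exp_mul_exp : Complex.exp (x * (1 + y * I) * I) *
      Complex.exp (-(π / 2) * I * ((-1 / 2 : ℝ) : ℂ)) =
        Complex.exp ((x + π / 4 : ℝ) * I) * (Real.exp (-(x * y)) : ℝ) := by
    rw [Complex.ofReal_exp, ← Complex.exp_add, ← Complex.exp_add]
    congr 1
    push_cast
    linear_combination (x * y : ℂ) * Complex.I_sq
  have two_mul_rpow : (2 * y) ^ (-1 / 2 : ℝ) = √2⁻¹ * y ^ ((1 / 2 : ℝ) - 1) := by
    rw [Real.mul_rpow zero_le_two hy.le, Real.sqrt_eq_rpow, Real.inv_rpow zero_le_two,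
      ← Real.rpow_neg zero_le_two]
    norm_num
  rw [poissonIntegrand, factor, ofReal_mul_cpow (by positivity) (by simp [ne_zero]),
    neg_I_mul_cpow ne_zero arg_gt, ← Complex.ofReal_cpow (by positivity), two_mul_rpow,
    Complex.real_smul]
  simp only [Complex.ofReal_mul]
  linear_combination (√2⁻¹ : ℝ) * (y ^ ((1 / 2 : ℝ) - 1) : ℝ) *
    (1 + y / 2 * I) ^ ((-1 / 2 : ℝ) : ℂ) * exp_mul_exp

end poissonIntegrand

/-- The non-oscillating Laplace-type factor `∫₀^∞ y^{-1/2} e^{-xy} (1 + iy/2)^{-1/2} dy` of `J0`,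
the Hankel amplitude. The power of `y` has exponent `1/2 - 1` as in the integral for `Γ(1/2)`. -/
noncomputable def hankelAmplitude (x : ℝ) : ℂ :=
  ∫ y in Ioi 0, (y ^ ((1 / 2 : ℝ) - 1) * Real.exp (-(x * y))) •
    (1 + y / 2 * I) ^ ((-1 / 2 : ℝ) : ℂ)

theorem J0_eq_im_exp_mul_hankelAmplitude {x : ℝ} (hx : 0 < x) :
    J0 x = √2 / π * (Complex.exp ((x + π / 4 : ℝ) * I) * hankelAmplitude x).im := by
  have contour : π / 2 * J0 x =
      √2⁻¹ * (Complex.exp ((x + π / 4 : ℝ) * I) * hankelAmplitude x).im := by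
    rw [← integral_cos_mul_inv_sqrt_eq_pi_div_two_mul_J0,
      poissonIntegrand.integral_cos_mul_inv_sqrt_eq_im hx,
      setIntegral_congr_fun measurableSet_Ioi fun y hy ↦
        poissonIntegrand.apply_one_add_mul_I x hy,
      integral_const_mul, mul_assoc, Complex.im_ofReal_mul, hankelAmplitude]
  have two_mul_inv : 2 * √2⁻¹ = √2 := by rw [Real.sqrt_inv, ← div_eq_mul_inv, Real.div_sqrt]
  rw [← two_mul_inv]
  field_simp at contour ⊢
  linear_combination contour

theorem norm_hankelAmplitude_sub_le {x : ℝ} (hx : 0 < x) :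
    ‖hankelAmplitude x - √(π / x)‖ ≤ √π / 8 * x ^ (-(3 : ℝ) / 2) := by
  have norm_sub_one_le (y : ℝ) (hy : 0 < y) :
      ‖(1 + y / 2 * I) ^ ((-1 / 2 : ℝ) : ℂ) - 1‖ ≤ 1 / 4 * y := by
    refine (norm_one_add_cpow_sub_one_le (by norm_num) (by simp)).trans_eq ?_
    have norm_eq : ‖(y / 2 * I : ℂ)‖ = y / 2 := by simp [abs_of_pos hy]
    rw [norm_eq, abs_of_neg (by norm_num)]
    ring
  have measurable : AEStronglyMeasurable (fun y : ℝ ↦ (1 + y / 2 * I) ^ ((-1 / 2 : ℝ) : ℂ))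
      (volume.restrict (Ioi 0)) :=
    (by fun_prop : Measurable _).aestronglyMeasurable
  have main_term : (1 / x) ^ (1 / 2 : ℝ) * Real.Gamma (1 / 2) = √(π / x) := by
    rw [Real.Gamma_one_half_eq, ← Real.sqrt_eq_rpow, ← Real.sqrt_mul (by positivity),
      one_div_mul_eq_div]
  have remainder : 1 / 4 * ((1 / x) ^ ((1 / 2 : ℝ) + 1) * Real.Gamma (1 / 2 + 1)) =
      √π / 8 * x ^ (-(3 : ℝ) / 2) := by
    rw [Real.Gamma_add_one (by norm_num), Real.Gamma_one_half_eq, one_div x, Real.inv_rpow hx.le,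
      ← Real.rpow_neg hx.le]
    have exponent_eq : -((1 / 2 : ℝ) + 1) = -3 / 2 := by norm_num
    rw [exponent_eq]
    ring
  have watson := norm_integral_rpow_mul_exp_smul_sub_le one_half_pos hx measurable norm_sub_one_le
  rwa [main_term, remainder, Complex.real_smul, mul_one] at watson

theorem J0_asymptotics_general {x : ℝ} (hx : 0 < x) :
    |J0 x - √(2 / π) * Real.cos (x - π / 4) / √x| ≤ √(2 / π) / 8 * x ^ (-(3 : ℝ) / 2) := by
  set e : ℂ := Complex.exp ((x + π / 4 : ℝ) * I)
  have leading : √(2 / π) * Real.cos (x - π / 4) / √x = √2 / π * (e * √(π / x)).im := by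
    have cos_eq_sin : Real.cos (x - π / 4) = Real.sin (x + π / 4) := by
      rw [← Real.cos_pi_div_two_sub, ← Real.cos_neg]; ring_nf
    rw [cos_eq_sin, Complex.im_mul_ofReal, Complex.exp_ofReal_mul_I_im, Real.sqrt_div zero_le_two,
      Real.sqrt_div Real.pi_pos.le]
    field_simp
    rw [Real.sq_sqrt Real.pi_pos.le]
  have difference : J0 x - √(2 / π) * Real.cos (x - π / 4) / √x =
      √2 / π * (e * (hankelAmplitude x - √(π / x))).im := by
    rw [J0_eq_im_exp_mul_hankelAmplitude hx, leading, mul_sub, Complex.sub_im, mul_sub]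
  calc |J0 x - √(2 / π) * Real.cos (x - π / 4) / √x|
    _ = √2 / π * |(e * (hankelAmplitude x - √(π / x))).im| := by
      rw [difference, abs_mul, abs_of_pos (by positivity)]
    _ ≤ √2 / π * ‖hankelAmplitude x - √(π / x)‖ := by
      gcongr
      refine (Complex.abs_im_le_norm _).trans_eq ?_
      rw [norm_mul, Complex.norm_exp_ofReal_mul_I, one_mul]
    _ ≤ √2 / π * (√π / 8 * x ^ (-(3 : ℝ) / 2)) := by
      gcongr
      exact norm_hankelAmplitude_sub_le hx
    _ = √(2 / π) / 8 * x ^ (-(3 : ℝ) / 2) := by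
      rw [Real.sqrt_div zero_le_two]
      field_simp
      rw [Real.sq_sqrt Real.pi_pos.le]

/-- Asymptotics of `J₀`: there is `C > 0` such that for all `x ≥ 1`,
`|J₀(x) − √(2/π) cos(x − π/4)/√x| ≤ C x^{−3/2}`. -/
theorem J0_asymptotics :
    ∃ C : ℝ, 0 < C ∧ ∀ x : ℝ, 1 ≤ x →
      |J0 x - Real.sqrt (2 / Real.pi) * Real.cos (x - Real.pi / 4) / Real.sqrt x| ≤
        C * x ^ (-(3 : ℝ) / 2) :=
  ⟨√(2 / π) / 8, by positivity, fun _ hx ↦ J0_asymptotics_general (one_pos.trans_le hx)⟩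
end

section
/- For every κ > 0 there exists a constant C > 0 such that for every n ≥ 1, the n-th positive zero of J₀ satisfies |z_n − π(n − 1/4) − 1/(8π(n − 1/4))| ≤ C n^{−(2−κ)}. -/
/-!
Moving the contour of `π / 2 * J0 x = ∫ θ in 0..π/2, cos (x * cos θ)` to the path of steepest
descent through the saddle `θ = 0` gives `π / 2 * J0 x = S x * sin x + C x * cos x`, where `S` and
`C` are integrals against a positive exponentially decaying weight. Hence `J0 x` is a positive
multiple of `cos (x - φ x)` with `tan φ = S / C`. Comparing weights shows that `φ` is decreasing, so
the positive zeros of `J0` are exactly the solutions of `x = π * (n + 1 / 2) + φ x`, one for each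
`n : ℕ`. Integration by parts gives `(S - C) / (S + C) = 1 / (8 * x) + O(x⁻³)`, that is,
`φ x = π / 4 + 1 / (8 * x) + O(x⁻³)`, and the zeros follow with error `O(n⁻³)`.
-/

open Set Filter Topology Real
open scoped Interval

namespace J0

/-! ### The steepest descent representation -/

theorem prod_odd_div_even_div_factorial (j : ℕ) :
    (∏ i ∈ Finset.range j, (2 * (i : ℝ) + 1) / (2 * i + 2)) / ((2 * j).factorial : ℝ) =
      1 / (4 ^ j * (j.factorial : ℝ) ^ 2) := by
  induction j with
  | zero => simp
  | succ k ih =>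
    have hk : (k.factorial : ℝ) ≠ 0 := by positivity
    have h2k : ((2 * k).factorial : ℝ) ≠ 0 := by positivity
    rw [div_eq_iff h2k] at ih
    rw [Finset.prod_range_succ, ih, show 2 * (k + 1) = 2 * k + 1 + 1 by ring]
    simp only [Nat.factorial_succ]
    push_cast
    field_simp
    ring

theorem hasSum_integral_cos_mul_cos (x : ℝ) :
    HasSum (fun j : ℕ ↦ ∫ θ in (0)..(π / 2), (-1) ^ j * (x * cos θ) ^ (2 * j) / (2 * j).factorial)
      (∫ θ in (0)..(π / 2), cos (x * cos θ)) := by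
  refine intervalIntegral.hasSum_integral_of_dominated_convergence
    (fun j _ ↦ |x| ^ (2 * j) / (2 * j).factorial)
    (fun j ↦ Continuous.aestronglyMeasurable (by fun_prop))
    (fun j ↦ .of_forall fun θ _ ↦ ?_)
    (.of_forall fun θ _ ↦ (hasSum_cosh |x|).summable)
    intervalIntegrable_const
    (.of_forall fun θ _ ↦ hasSum_cos _)
  rw [norm_div, norm_mul, norm_pow, norm_pow, norm_neg, norm_one, one_pow, one_mul,
    norm_natCast, norm_mul, norm_eq_abs, norm_eq_abs]
  gcongr
  exact mul_le_of_le_one_right (abs_nonneg _) (abs_cos_le_one θ)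

theorem integral_cos_pow_even (j : ℕ) :
    ∫ θ in (0)..(π / 2), cos θ ^ (2 * j) =
      π / 2 * ((2 * j).factorial / (4 ^ j * (j.factorial : ℝ) ^ 2)) := by
  have h2j : ((2 * j).factorial : ℝ) ≠ 0 := by positivity
  rw [EulerSine.integral_cos_pow_eq, integral_sin_pow_even,
    (div_eq_iff h2j).1 (prod_odd_div_even_div_factorial j)]
  ring

theorem pi_div_two_mul_eq_integral (x : ℝ) :
    π / 2 * J0 x = ∫ θ in (0)..(π / 2), cos (x * cos θ) := by
  rw [← (hasSum_integral_cos_mul_cos x).tsum_eq, J0, ← tsum_mul_left]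
  congr 1 with j
  have hj : ∀ θ, (-1) ^ j * (x * cos θ) ^ (2 * j) / (2 * j).factorial =
      (-1) ^ j * x ^ (2 * j) / (2 * j).factorial * cos θ ^ (2 * j) := fun θ ↦ by ring
  have h2j : ((2 * j).factorial : ℝ) ≠ 0 := by positivity
  simp only [hj, intervalIntegral.integral_const_mul, integral_cos_pow_even]
  rw [div_pow, pow_mul 2 2 j]
  norm_num
  field_simp

protected theorem continuous : Continuous J0 := by
  have h : J0 = fun x ↦ 2 / π * ∫ θ in (0)..(π / 2), cos (x * cos θ) := by
    ext x
    rw [← pi_div_two_mul_eq_integral]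
    field_simp
  rw [h]
  exact continuous_const.mul
    (intervalIntegral.continuous_parametric_intervalIntegral_of_continuous' (by fun_prop) _ _)

/-- The imaginary part of the cosine on `descentPath`. -/
noncomputable def descentHeight (a : ℝ) : ℝ := (cos a)⁻¹ - cos a

/-- The modulus of `exp (i x cos z)` at the point `z = descentPath a`. It is set to zero where
`cos a ≤ 0`, which makes it continuous at the end `a = π / 2` of the path. -/
noncomputable def descentWeight (x a : ℝ) : ℝ :=
  if 0 < cos a then exp (-(x * descentHeight a)) else 0

theorem cos_pos_of_mem {a : ℝ} (ha : a ∈ Ioo 0 (π / 2)) : 0 < cos a :=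
  cos_pos_of_mem_Ioo ⟨by linarith [ha.1, pi_pos], ha.2⟩

theorem descentWeight_of_cos_pos (x : ℝ) {a : ℝ} (ha : 0 < cos a) :
    descentWeight x a = exp (-(x * descentHeight a)) := if_pos ha

theorem descentWeight_of_cos_eq_zero (x : ℝ) {a : ℝ} (ha : cos a = 0) :
    descentWeight x a = 0 := if_neg ha.not_gt

theorem descentWeight_nonneg (x a : ℝ) : 0 ≤ descentWeight x a := by
  unfold descentWeight
  positivity

theorem descentWeight_eq_expNegInvGlue {x : ℝ} (hx : 0 < x) (a : ℝ) :
    descentWeight x a = exp (x * cos a) * expNegInvGlue (cos a / x) := by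
  rcases lt_or_ge 0 (cos a) with ha | ha
  · rw [descentWeight_of_cos_pos x ha, expNegInvGlue, if_neg (div_pos ha hx).not_ge, ← exp_add,
      descentHeight]
    congr 1
    field_simp
    ring
  · rw [descentWeight, if_neg ha.not_gt,
      expNegInvGlue.zero_of_nonpos (div_nonpos_of_nonpos_of_nonneg ha hx.le), mul_zero]

theorem continuous_descentWeight_mul_inv_cos_pow {x : ℝ} (hx : 0 < x) (m : ℕ) :
    Continuous fun a ↦ descentWeight x a * (cos a)⁻¹ ^ m := by
  have hglue := expNegInvGlue.continuous_polynomial_eval_inv_mul (.X ^ m)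
  have hexp : Continuous fun a ↦ x⁻¹ ^ m * exp (x * cos a) := by fun_prop
  refine (hexp.mul (hglue.comp (continuous_cos.div_const x))).congr fun a ↦ ?_
  have hcancel : x⁻¹ ^ m * (cos a / x)⁻¹ ^ m = (cos a)⁻¹ ^ m := by
    rw [← mul_pow, inv_div, div_eq_mul_inv, inv_mul_cancel_left₀ hx.ne']
  simp only [Pi.mul_apply, Function.comp_apply, Polynomial.eval_pow, Polynomial.eval_X,
    descentWeight_eq_expNegInvGlue hx, ← hcancel]
  ring

theorem continuous_descentWeight_mul {x : ℝ} (hx : 0 < x) {f g : ℝ → ℝ} (m : ℕ)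
    (hg : Continuous g) (hfg : ∀ a, 0 < cos a → f a = g a * (cos a)⁻¹ ^ m) :
    Continuous fun a ↦ descentWeight x a * f a := by
  refine (hg.mul (continuous_descentWeight_mul_inv_cos_pow hx m)).congr fun a ↦ ?_
  by_cases ha : 0 < cos a
  · rw [hfg a ha]
    exact mul_left_comm _ _ _
  · simp only [Pi.mul_apply, descentWeight, if_neg ha, zero_mul, mul_zero]

/-- The path of steepest descent for `exp (i x cos z)` from the saddle `0` to `π / 2 - i ∞`,
parametrised by its real part. On it `cos z - 1` is purely imaginary. -/
noncomputable def descentPath (a : ℝ) : ℂ := a - arsinh (tan a) * Complex.I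

theorem cos_descentPath {a : ℝ} (ha : 0 < cos a) :
    Complex.cos (descentPath a) = 1 + descentHeight a * Complex.I := by
  have hcosh : cosh (arsinh (tan a)) = (cos a)⁻¹ := by
    rw [cosh_arsinh, ← inv_sqrt_one_add_tan_sq ha, inv_inv]
  rw [descentPath, Complex.cos_sub, Complex.cos_mul_I, Complex.sin_mul_I, ← Complex.ofReal_cosh,
    ← Complex.ofReal_sinh, hcosh, sinh_arsinh, ← Complex.ofReal_cos, ← Complex.ofReal_sin]
  have hre : cos a * (cos a)⁻¹ = 1 := mul_inv_cancel₀ ha.ne'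
  have him : sin a * tan a = descentHeight a := by
    rw [tan_eq_sin_div_cos, descentHeight]
    field_simp
    exact sin_sq a
  rw [← mul_assoc, ← Complex.ofReal_mul, ← Complex.ofReal_mul, hre, him, Complex.ofReal_one]

theorem exp_I_mul_cos_descentPath (x : ℝ) {a : ℝ} (ha : 0 < cos a) :
    Complex.exp (Complex.I * x * Complex.cos (descentPath a)) =
      descentWeight x a * (cos x + sin x * Complex.I) := by
  rw [cos_descentPath ha, descentWeight_of_cos_pos x ha, Complex.ofReal_exp, Complex.ofReal_cos,
    Complex.ofReal_sin, ← Complex.exp_mul_I, ← Complex.exp_add]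
  congr 1
  push_cast
  linear_combination (x * descentHeight a : ℂ) * Complex.I_sq

theorem hasDerivAt_descentPath {a : ℝ} (ha : 0 < cos a) :
    HasDerivAt descentPath (1 - (cos a)⁻¹ * Complex.I) a := by
  have hsec : HasDerivAt (fun a ↦ arsinh (tan a)) (cos a)⁻¹ a := by
    convert (hasDerivAt_tan ha.ne').arsinh using 1
    rw [inv_sqrt_one_add_tan_sq ha]
    simp only [smul_eq_mul]
    field_simp
  exact (hasDerivAt_id a).ofReal_comp.sub (hsec.ofReal_comp.mul_const Complex.I)

section Primitive

variable {x : ℝ} {G : ℂ → ℂ}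
  (hG : ∀ z, HasDerivAt G (Complex.exp (Complex.I * x * Complex.cos z)) z)

include hG

theorem re_primitive_sub_re_primitive_zero :
    (G (π / 2 : ℝ)).re - (G 0).re = ∫ θ in (0)..(π / 2), cos (x * cos θ) := by
  have hderiv : ∀ θ ∈ [[0, π / 2]], HasDerivAt (fun t : ℝ ↦ (G t).re) (cos (x * cos θ)) θ := by
    intro θ _
    have h := (hG θ).real_of_complex
    rwa [mul_comm Complex.I, mul_right_comm, ← Complex.ofReal_cos, ← Complex.ofReal_mul,
      Complex.exp_ofReal_mul_I_re] at h
  rw [intervalIntegral.integral_eq_sub_of_hasDerivAt hderiv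
    (Continuous.intervalIntegrable (by fun_prop) _ _), Complex.ofReal_zero]

theorem re_primitive_pi_div_two_sub_mul_I (y : ℝ) :
    (G ((π / 2 : ℝ) - y * Complex.I)).re = (G (π / 2 : ℝ)).re := by
  have hderiv : ∀ y : ℝ,
      HasDerivAt (fun y : ℝ ↦ (G ((π / 2 : ℝ) - y * Complex.I)).re) 0 y := by
    intro y
    have hline : HasDerivAt (fun y : ℝ ↦ ((π / 2 : ℝ) - y * Complex.I : ℂ)) (-Complex.I) y := by
      simpa using ((hasDerivAt_id y).ofReal_comp.mul_const Complex.I).const_sub ((π / 2 : ℝ) : ℂ)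
    have hcos : Complex.I * x * Complex.cos ((π / 2 : ℝ) - y * Complex.I) =
        ((-(x * sinh y) : ℝ) : ℂ) := by
      push_cast
      rw [Complex.cos_pi_div_two_sub, Complex.sin_mul_I]
      linear_combination (x * Complex.sinh y : ℂ) * Complex.I_sq
    refine (Complex.reCLM.hasFDerivAt.comp_hasDerivAt y ((hG _).comp y hline)).congr_deriv ?_
    rw [hcos, ← Complex.ofReal_exp, Complex.reCLM_apply, Complex.re_ofReal_mul, Complex.neg_re,
      Complex.I_re, neg_zero, mul_zero]
  have hconst := is_const_of_deriv_eq_zero (fun y ↦ (hderiv y).differentiableAt)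
    (fun y ↦ (hderiv y).deriv) y 0
  simpa using hconst

theorem norm_primitive_sub_le {a b y : ℝ} (ha : a ∈ Icc 0 π) (hb : b ∈ Icc 0 π) (hy : 0 ≤ y)
    (hx : 0 ≤ x) :
    ‖G (a - y * Complex.I) - G (b - y * Complex.I)‖ ≤ |a - b| := by
  have hderiv : ∀ t ∈ Icc 0 π, HasDerivWithinAt (fun t : ℝ ↦ G (t - y * Complex.I))
      (Complex.exp (Complex.I * x * Complex.cos (t - y * Complex.I))) (Icc 0 π) t := by
    intro t _
    have hline : HasDerivAt (fun t : ℝ ↦ (t - y * Complex.I : ℂ)) 1 t :=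
      (hasDerivAt_id t).ofReal_comp.sub_const _
    exact (((hG _).comp t hline).congr_deriv (mul_one _)).hasDerivWithinAt
  have hbound : ∀ t ∈ Icc 0 π,
      ‖Complex.exp (Complex.I * x * Complex.cos (t - y * Complex.I))‖ ≤ 1 := by
    intro t ht
    have hre : (Complex.I * x * Complex.cos (t - y * Complex.I)).re =
        -(x * (sin t * sinh y)) := by
      rw [Complex.cos_sub, Complex.cos_mul_I, Complex.sin_mul_I, ← Complex.ofReal_cosh,
        ← Complex.ofReal_sinh, ← Complex.ofReal_cos, ← Complex.ofReal_sin, mul_right_comm,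
        mul_comm _ (x : ℂ), Complex.re_ofReal_mul]
      simp only [Complex.mul_re, Complex.mul_im, Complex.add_im, Complex.I_re,
        Complex.I_im, Complex.ofReal_re, Complex.ofReal_im]
      ring
    rw [Complex.norm_exp, hre, exp_le_one_iff, neg_nonpos]
    exact mul_nonneg hx (mul_nonneg (sin_nonneg_of_mem_Icc ht) (sinh_nonneg_iff.2 hy))
  simpa using (convex_Icc 0 π).norm_image_sub_le_of_norm_hasDerivWithin_le hderiv hbound hb ha

theorem tendsto_re_primitive_descentPath (hx : 0 ≤ x) :
    Tendsto (fun a ↦ (G (descentPath a)).re) (𝓝[<] (π / 2)) (𝓝 (G (π / 2 : ℝ)).re) := by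
  have hclose : ∀ a ∈ Ioo 0 (π / 2),
      dist (G (descentPath a)).re (G (π / 2 : ℝ)).re ≤ |a - π / 2| := by
    intro a ha
    have htan : 0 ≤ arsinh (tan a) :=
      arsinh_nonneg_iff.2 (tan_nonneg_of_nonneg_of_le_pi_div_two ha.1.le ha.2.le)
    rw [← re_primitive_pi_div_two_sub_mul_I hG (arsinh (tan a)), dist_eq, ← Complex.sub_re]
    exact (Complex.abs_re_le_norm _).trans (norm_primitive_sub_le hG
      ⟨ha.1.le, by linarith [ha.2, pi_pos]⟩ ⟨by positivity, by linarith [pi_pos]⟩ htan hx)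
  have hgap : Tendsto (fun a ↦ |a - π / 2|) (𝓝[<] (π / 2)) (𝓝 0) := by
    have h : Continuous fun a ↦ |a - π / 2| := by fun_prop
    simpa using (h.tendsto (π / 2)).mono_left nhdsWithin_le_nhds
  refine tendsto_iff_dist_tendsto_zero.2 (squeeze_zero' (.of_forall fun _ ↦ dist_nonneg) ?_ hgap)
  filter_upwards [Ioo_mem_nhdsLT (show (0 : ℝ) < π / 2 by positivity)] using hclose

theorem hasDerivAt_re_primitive_descentPath {a : ℝ} (ha : 0 < cos a) :
    HasDerivAt (fun a ↦ (G (descentPath a)).re)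
      (descentWeight x a * (cos x + sin x * (cos a)⁻¹)) a := by
  refine (Complex.reCLM.hasFDerivAt.comp_hasDerivAt a
    ((hG _).comp a (hasDerivAt_descentPath ha))).congr_deriv ?_
  rw [exp_I_mul_cos_descentPath x ha, Complex.reCLM_apply, mul_assoc, Complex.re_ofReal_mul]
  simp only [Complex.mul_re, Complex.add_re, Complex.add_im, Complex.mul_im, Complex.sub_re,
    Complex.sub_im, Complex.I_re, Complex.I_im, Complex.ofReal_re, Complex.ofReal_im,
    Complex.one_re, Complex.one_im]
  ring

end Primitive

theorem pi_div_two_mul_eq_integral_descentWeight {x : ℝ} (hx : 0 < x) :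
    π / 2 * J0 x =
      ∫ a in (0)..(π / 2), descentWeight x a * (cos x + sin x * (cos a)⁻¹) := by
  have hexact : Differentiable ℂ fun z ↦ Complex.exp (Complex.I * x * Complex.cos z) := by fun_prop
  obtain ⟨G, hG⟩ := hexact.isExactOn_univ
  replace hG := fun z ↦ hG z (mem_univ z)
  have hcont : Continuous fun a ↦ descentWeight x a * (cos x + sin x * (cos a)⁻¹) := by
    refine continuous_descentWeight_mul hx (g := fun a ↦ cos x * cos a + sin x) 1 (by fun_prop)
      fun a ha ↦ ?_
    field_simp
  have hzero : Tendsto (fun a ↦ (G (descentPath a)).re) (𝓝[>] 0) (𝓝 (G 0).re) := by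
    have h := (hasDerivAt_re_primitive_descentPath hG (a := 0) (by simp)).continuousAt.tendsto
    simpa [descentPath] using h.mono_left nhdsWithin_le_nhds
  rw [intervalIntegral.integral_eq_sub_of_hasDerivAt_of_tendsto (by positivity)
    (fun a ha ↦ hasDerivAt_re_primitive_descentPath hG (cos_pos_of_mem ha))
    (hcont.intervalIntegrable _ _) hzero (tendsto_re_primitive_descentPath hG hx.le),
    re_primitive_sub_re_primitive_zero hG, pi_div_two_mul_eq_integral]

/-! ### Amplitudes and phase -/

/-- The integral of `f` against the weight of the steepest descent path. -/
noncomputable def descentIntegral (x : ℝ) (f : ℝ → ℝ) : ℝ :=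
  ∫ a in (0)..(π / 2), descentWeight x a * f a

theorem descentIntegral_le_descentIntegral {x y : ℝ} {f g : ℝ → ℝ}
    (hf : Continuous fun a ↦ descentWeight x a * f a)
    (hg : Continuous fun a ↦ descentWeight y a * g a)
    (h : ∀ a ∈ Ioo 0 (π / 2), descentWeight x a * f a ≤ descentWeight y a * g a) :
    descentIntegral x f ≤ descentIntegral y g :=
  intervalIntegral.integral_mono_on_of_le_Ioo (by positivity) (hf.intervalIntegrable _ _)
    (hg.intervalIntegrable _ _) h

theorem descentIntegral_mono {x : ℝ} {f g : ℝ → ℝ}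
    (hf : Continuous fun a ↦ descentWeight x a * f a)
    (hg : Continuous fun a ↦ descentWeight x a * g a) (h : ∀ a ∈ Ioo 0 (π / 2), f a ≤ g a) :
    descentIntegral x f ≤ descentIntegral x g :=
  descentIntegral_le_descentIntegral hf hg fun a ha ↦
    mul_le_mul_of_nonneg_left (h a ha) (descentWeight_nonneg x a)

theorem descentIntegral_pos {x : ℝ} {f : ℝ → ℝ}
    (hf : Continuous fun a ↦ descentWeight x a * f a) (h : ∀ a ∈ Ioo 0 (π / 2), 0 < f a) :
    0 < descentIntegral x f := by
  refine intervalIntegral.intervalIntegral_pos_of_pos_on (hf.intervalIntegrable _ _)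
    (fun a ha ↦ ?_) (by positivity)
  rw [descentWeight_of_cos_pos x (cos_pos_of_mem ha)]
  exact mul_pos (exp_pos _) (h a ha)

theorem descentIntegral_const_mul (x p : ℝ) (f : ℝ → ℝ) :
    descentIntegral x (fun a ↦ p * f a) = p * descentIntegral x f := by
  simp only [descentIntegral, mul_left_comm _ p, intervalIntegral.integral_const_mul]

theorem descentIntegral_const_mul_add_const_mul {x : ℝ} {f g : ℝ → ℝ} (p q : ℝ)
    (hf : Continuous fun a ↦ descentWeight x a * f a)
    (hg : Continuous fun a ↦ descentWeight x a * g a) :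
    descentIntegral x (fun a ↦ p * f a + q * g a) =
      p * descentIntegral x f + q * descentIntegral x g := by
  rw [← descentIntegral_const_mul, ← descentIntegral_const_mul]
  simp only [descentIntegral, mul_add, mul_left_comm _ p, mul_left_comm _ q]
  exact intervalIntegral.integral_add ((hf.intervalIntegrable _ _).const_mul p)
    ((hg.intervalIntegrable _ _).const_mul q)

/-- The coefficient of `cos x` in `π / 2 * J0 x`. -/
noncomputable def cosAmplitude (x : ℝ) : ℝ := descentIntegral x fun _ ↦ 1

/-- The coefficient of `sin x` in `π / 2 * J0 x`. -/
noncomputable def sinAmplitude (x : ℝ) : ℝ := descentIntegral x fun a ↦ (cos a)⁻¹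

/-- The phase shift of `J0`: at `x > 0`, `J0 x` is a positive multiple of `cos (x - phase x)`. -/
noncomputable def phase (x : ℝ) : ℝ := arctan (sinAmplitude x / cosAmplitude x)

theorem one_lt_inv_cos_of_mem {a : ℝ} (ha : a ∈ Ioo 0 (π / 2)) : 1 < (cos a)⁻¹ := by
  rw [one_lt_inv₀ (cos_pos_of_mem ha), ← cos_zero]
  exact cos_lt_cos_of_nonneg_of_le_pi_div_two le_rfl ha.2.le ha.1

section Amplitude

variable {x : ℝ} (hx : 0 < x)

include hx

theorem continuous_descentWeight_mul_one : Continuous fun a ↦ descentWeight x a * 1 :=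
  continuous_descentWeight_mul hx 0 continuous_one fun _ _ ↦ by rw [pow_zero, Pi.one_apply, mul_one]

theorem continuous_descentWeight_mul_inv_cos : Continuous fun a ↦ descentWeight x a * (cos a)⁻¹ :=
  continuous_descentWeight_mul hx 1 continuous_one fun _ _ ↦ by rw [pow_one, Pi.one_apply, one_mul]

theorem descentIntegral_mul_inv_cos_add_const (p q : ℝ) :
    descentIntegral x (fun a ↦ p * (cos a)⁻¹ + q) = p * sinAmplitude x + q * cosAmplitude x := by
  simpa only [mul_one, sinAmplitude, cosAmplitude] using descentIntegral_const_mul_add_const_mul p q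
    (continuous_descentWeight_mul_inv_cos hx) (continuous_descentWeight_mul_one hx)

theorem continuous_descentWeight_mul_affine_inv_cos (p q : ℝ) :
    Continuous fun a ↦ descentWeight x a * (p * (cos a)⁻¹ + q) := by
  refine continuous_descentWeight_mul hx (g := fun a ↦ p + q * cos a) 1 (by fun_prop)
    fun a ha ↦ ?_
  field_simp

theorem cosAmplitude_pos : 0 < cosAmplitude x :=
  descentIntegral_pos (continuous_descentWeight_mul_one hx) fun _ _ ↦ one_pos

theorem cosAmplitude_lt_sinAmplitude : cosAmplitude x < sinAmplitude x := by
  have h := descentIntegral_pos (continuous_descentWeight_mul_affine_inv_cos hx 1 (-1))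
    fun a ha ↦ by
      linarith [one_lt_inv_cos_of_mem ha]
  rw [descentIntegral_mul_inv_cos_add_const hx] at h
  linarith

theorem pi_div_two_mul_eq_amplitudes :
    π / 2 * J0 x = sinAmplitude x * sin x + cosAmplitude x * cos x := by
  rw [pi_div_two_mul_eq_integral_descentWeight hx, mul_comm, mul_comm (cosAmplitude x),
    ← descentIntegral_mul_inv_cos_add_const hx]
  simp only [descentIntegral, add_comm]

theorem exists_pos_eq_mul_cos_sub_phase : ∃ c > 0, J0 x = c * cos (x - phase x) := by
  have hcos : 0 < cos (phase x) := cos_arctan_pos _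
  have hsin : sinAmplitude x = cosAmplitude x * (sin (phase x) / cos (phase x)) := by
    rw [← tan_eq_sin_div_cos, phase, tan_arctan, mul_div_cancel₀ _ (cosAmplitude_pos hx).ne']
  have hamp := cosAmplitude_pos hx
  refine ⟨2 / π * (cosAmplitude x / cos (phase x)), by positivity, ?_⟩
  have h := pi_div_two_mul_eq_amplitudes hx
  rw [hsin] at h
  rw [cos_sub, eq_div_of_mul_eq pi_div_two_pos.ne' ((mul_comm _ _).trans h)]
  field_simp
  ring

theorem phase_mem_Ioo : phase x ∈ Ioo (π / 4) (π / 2) := by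
  refine ⟨?_, arctan_lt_pi_div_two _⟩
  rw [← arctan_one, phase, arctan_lt_arctan_iff, one_lt_div (cosAmplitude_pos hx)]
  exact cosAmplitude_lt_sinAmplitude hx

end Amplitude

/-- With `s = sec a`, the exponent `descentHeight a = s - s⁻¹` increases with `s`, so passing from
`x` to `y` damps the part where `s > t` more than the part where `s < t`. -/
theorem descentWeight_mul_inv_cos_sub_le {x y a t : ℝ} (hxy : x ≤ y) (ht : 0 < t)
    (ha : 0 < cos a) :
    descentWeight y a * ((cos a)⁻¹ - t) ≤
      descentWeight x a * (exp (-((y - x) * (t - t⁻¹))) * ((cos a)⁻¹ - t)) := by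
  have hweight : descentWeight y a = descentWeight x a * exp (-((y - x) * descentHeight a)) := by
    rw [descentWeight_of_cos_pos y ha, descentWeight_of_cos_pos x ha, ← exp_add]
    ring_nf
  have : 0 ≤ y - x := sub_nonneg.2 hxy
  rw [hweight, mul_assoc]
  refine mul_le_mul_of_nonneg_left ?_ (descentWeight_nonneg x a)
  rcases le_total t (cos a)⁻¹ with hta | hta
  · have hheight : t - t⁻¹ ≤ descentHeight a :=
      sub_le_sub hta ((le_inv_comm₀ ht ha).1 hta)
    have := sub_nonneg.2 hta
    gcongr
  · have hheight : descentHeight a ≤ t - t⁻¹ :=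
      sub_le_sub hta ((inv_le_comm₀ ha ht).1 hta)
    have := sub_nonpos.2 hta
    refine mul_le_mul_of_nonpos_right ?_ this
    gcongr

theorem antitoneOn_phase : AntitoneOn phase (Ioi 0) := by
  intro x (hx : 0 < x) y (hy : 0 < y) hxy
  set t := sinAmplitude x / cosAmplitude x with ht
  have htpos : 0 < t := div_pos ((cosAmplitude_pos hx).trans (cosAmplitude_lt_sinAmplitude hx))
    (cosAmplitude_pos hx)
  set q := exp (-((y - x) * (t - t⁻¹)))
  have hle : descentIntegral y (fun a ↦ 1 * (cos a)⁻¹ + -t) ≤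
      descentIntegral x fun a ↦ q * (cos a)⁻¹ + -(q * t) := by
    refine descentIntegral_le_descentIntegral (continuous_descentWeight_mul_affine_inv_cos hy 1 _)
      (continuous_descentWeight_mul_affine_inv_cos hx q _) fun a ha ↦ ?_
    convert descentWeight_mul_inv_cos_sub_le hxy htpos (cos_pos_of_mem ha) using 2 <;> ring
  have hbal : q * sinAmplitude x + -(q * t) * cosAmplitude x = 0 := by
    rw [ht]
    field_simp [(cosAmplitude_pos hx).ne']
    ring
  rw [descentIntegral_mul_inv_cos_add_const hy, descentIntegral_mul_inv_cos_add_const hx, hbal]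
    at hle
  refine arctan_le_arctan_iff.2 ((div_le_iff₀ (cosAmplitude_pos hy)).2 ?_)
  linarith

theorem strictMonoOn_sub_phase : StrictMonoOn (fun x ↦ x - phase x) (Ioi 0) :=
  fun _ hx _ hy hxy ↦ by
    dsimp only
    linarith [antitoneOn_phase hx hy hxy.le]

/-! ### The zeros in terms of the phase -/

theorem eq_zero_iff {x : ℝ} (hx : 0 < x) :
    J0 x = 0 ↔ ∃ n : ℕ, x = π * (n + 1 / 2) + phase x := by
  obtain ⟨c, hc, hJ⟩ := exists_pos_eq_mul_cos_sub_phase hx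
  rw [hJ, mul_eq_zero_iff_left hc.ne', cos_eq_zero_iff]
  constructor
  · rintro ⟨k, hk⟩
    have hnonneg : 0 ≤ k := by
      have h : (0 : ℝ) < k + 1 := by
        by_contra! h
        have := mul_nonpos_of_nonneg_of_nonpos pi_pos.le h
        linarith [(phase_mem_Ioo hx).2]
      exact Int.lt_add_one_iff.1 (by exact_mod_cast h)
    obtain ⟨n, rfl⟩ := Int.eq_ofNat_of_zero_le hnonneg
    exact ⟨n, by push_cast at hk; linarith⟩
  · rintro ⟨n, hn⟩
    exact ⟨n, by push_cast; linarith⟩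

theorem neg_one_pow_mul_pos {x : ℝ} (hx : 0 < x) {n : ℕ}
    (h : |x - phase x - n * π| < π / 2) : 0 < (-1) ^ n * J0 x := by
  obtain ⟨c, hc, hJ⟩ := exists_pos_eq_mul_cos_sub_phase hx
  rw [hJ, mul_left_comm, ← cos_sub_nat_mul_pi]
  exact mul_pos hc (cos_pos_of_mem_Ioo (abs_lt.1 h))

theorem exists_eq_add_phase (n : ℕ) : ∃ x > 0, x = π * (n + 1 / 2) + phase x := by
  have hleft : 0 < π * (n + 3 / 4) := by positivity
  have hle : π * (n + 3 / 4) ≤ π * (n + 1) := by gcongr; norm_num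
  have hpos : 0 < (-1) ^ n * J0 (π * (n + 3 / 4)) := by
    obtain ⟨hlo, hhi⟩ := phase_mem_Ioo hleft
    exact neg_one_pow_mul_pos hleft (abs_lt.2 ⟨by linarith [pi_pos], by linarith⟩)
  have hneg : 0 < (-1) ^ (n + 1) * J0 (π * (n + 1)) := by
    obtain ⟨hlo, hhi⟩ := phase_mem_Ioo (hleft.trans_le hle)
    refine neg_one_pow_mul_pos (hleft.trans_le hle) (abs_lt.2 ⟨?_, ?_⟩) <;>
    · push_cast
      linarith [pi_pos]
  rw [pow_succ, mul_neg_one, neg_mul, neg_pos] at hneg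
  obtain ⟨x, ⟨hlo, hhi⟩, hx⟩ := intermediate_value_Ioo' hle
    (J0.continuous.const_mul ((-1) ^ n)).continuousOn ⟨hneg, hpos⟩
  have hxpos : 0 < x := hleft.trans hlo
  obtain ⟨m, hm⟩ := (eq_zero_iff hxpos).1 ((mul_eq_zero_iff_left (by simp)).1 hx)
  obtain ⟨hφlo, hφhi⟩ := phase_mem_Ioo hxpos
  have hmn : m < n + 1 := by
    have h : π * m < π * (n + 1) := by linarith
    exact_mod_cast lt_of_mul_lt_mul_left h pi_pos.le
  have hnm : n < m + 1 := by
    have h : π * n < π * (m + 1) := by linarith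
    exact_mod_cast lt_of_mul_lt_mul_left h pi_pos.le
  obtain rfl : m = n := by omega
  exact ⟨x, hxpos, hm⟩

theorem eq_add_phase_of_enumeration {z : ℕ → ℝ} (hzpos : ∀ n, 1 ≤ n → 0 < z n)
    (hzmono : ∀ m n, 1 ≤ m → m < n → z m < z n) (hzzero : ∀ n, 1 ≤ n → J0 (z n) = 0)
    (hzall : ∀ x : ℝ, 0 < x → J0 x = 0 → ∃ n, 1 ≤ n ∧ z n = x) (n : ℕ) :
    z (n + 1) = π * (n + 1 / 2) + phase (z (n + 1)) := by
  choose ζ hζpos hζ using exists_eq_add_phase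
  have hζmono : StrictMono ζ := fun m k hmk ↦ by
    refine (strictMonoOn_sub_phase.lt_iff_lt (hζpos m) (hζpos k)).1 ?_
    have : π * (m : ℝ) < π * k := by gcongr
    linarith [hζ m, hζ k]
  have hζrange : range ζ = {x | 0 < x ∧ J0 x = 0} := by
    ext x
    constructor
    · rintro ⟨k, rfl⟩
      exact ⟨hζpos k, (eq_zero_iff (hζpos k)).2 ⟨k, hζ k⟩⟩
    · rintro ⟨hx, hJ⟩
      obtain ⟨k, hk⟩ := (eq_zero_iff hx).1 hJ
      exact ⟨k, strictMonoOn_sub_phase.injOn (hζpos k) hx (by linarith [hζ k])⟩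
  have hzrange : range (fun k ↦ z (k + 1)) = {x | 0 < x ∧ J0 x = 0} := by
    ext x
    constructor
    · rintro ⟨k, rfl⟩
      exact ⟨hzpos _ le_add_self, hzzero _ le_add_self⟩
    · rintro ⟨hx, hJ⟩
      obtain ⟨k, hk, rfl⟩ := hzall x hx hJ
      exact ⟨k - 1, by simp only [Nat.sub_add_cancel hk]⟩
  have hzζ : (fun k ↦ z (k + 1)) = ζ :=
    (StrictMono.range_inj (fun m k hmk ↦ hzmono _ _ le_add_self (by omega)) hζmono).1
      (hzrange.trans hζrange.symm)
  rw [congrFun hzζ n]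
  exact hζ n

/-! ### Asymptotics of the phase -/

theorem hasDerivAt_inv_cos {a : ℝ} (ha : cos a ≠ 0) :
    HasDerivAt (fun a ↦ (cos a)⁻¹) (sin a * (cos a)⁻¹ ^ 2) a := by
  refine ((hasDerivAt_cos a).inv ha).congr_deriv ?_
  field_simp

theorem hasDerivAt_descentHeight {a : ℝ} (ha : cos a ≠ 0) :
    HasDerivAt descentHeight (sin a * (1 + (cos a)⁻¹ ^ 2)) a :=
  ((hasDerivAt_inv_cos ha).sub (hasDerivAt_cos a)).congr_deriv (by ring)

theorem hasDerivAt_descentWeight (x : ℝ) {a : ℝ} (ha : 0 < cos a) :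
    HasDerivAt (descentWeight x)
      (-(x * (descentWeight x a * (sin a * (1 + (cos a)⁻¹ ^ 2))))) a := by
  have hexp := ((hasDerivAt_descentHeight ha.ne').const_mul x).neg.exp
  refine (hexp.congr_of_eventuallyEq ?_).congr_deriv ?_
  · filter_upwards [continuous_cos.continuousAt.eventually_const_lt ha] with b hb
    exact descentWeight_of_cos_pos x hb
  · rw [descentWeight_of_cos_pos x ha]
    simp only [Pi.neg_apply]
    ring

theorem mul_descentIntegral_eq_descentIntegral_deriv {x : ℝ} {F F' H : ℝ → ℝ} (hF₀ : F 0 = 0)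
    (hF : ∀ a ∈ Ioo 0 (π / 2), HasDerivAt F (F' a) a)
    (hH : ∀ a ∈ Ioo 0 (π / 2), F a * (sin a * (1 + (cos a)⁻¹ ^ 2)) = H a)
    (hFc : Continuous fun a ↦ descentWeight x a * F a)
    (hF'c : Continuous fun a ↦ descentWeight x a * F' a)
    (hHc : Continuous fun a ↦ descentWeight x a * H a) :
    x * descentIntegral x H = descentIntegral x F' := by
  have hderiv : ∀ a ∈ Ioo 0 (π / 2), HasDerivAt (fun a ↦ descentWeight x a * F a)
      (1 * (descentWeight x a * F' a) - x * (descentWeight x a * H a)) a := fun a ha ↦ by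
    refine ((hasDerivAt_descentWeight x (cos_pos_of_mem ha)).mul (hF a ha)).congr_deriv ?_
    rw [← hH a ha]
    ring
  have hFTC := intervalIntegral.integral_eq_sub_of_hasDerivAt_of_le pi_div_two_pos.le
    hFc.continuousOn hderiv
    (((hF'c.intervalIntegrable _ _).const_mul 1).sub ((hHc.intervalIntegrable _ _).const_mul x))
  rw [intervalIntegral.integral_sub ((hF'c.intervalIntegrable _ _).const_mul 1)
      ((hHc.intervalIntegrable _ _).const_mul x), intervalIntegral.integral_const_mul,
    intervalIntegral.integral_const_mul, hF₀, descentWeight_of_cos_eq_zero x cos_pi_div_two] at hFTC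
  simp only [descentIntegral]
  linarith

/-- The density of `descentMoment`. Up to the factor `-x`, it is what differentiating the weight in
`descentWeight x a * (descentHeight a ^ (k - 1) * sin a)` produces, for `k ≥ 1`. -/
noncomputable def momentDensity (k : ℕ) (a : ℝ) : ℝ := descentHeight a ^ k * ((cos a)⁻¹ + cos a)

/-- The moments of the descent height that bound the errors in the expansion of the amplitudes. -/
noncomputable def descentMoment (k : ℕ) (x : ℝ) : ℝ := descentIntegral x (momentDensity k)

/-- The product of `sin a + tan a` with the derivative of `descentHeight`; it agrees with
`8 * ((cos a)⁻¹ - 1)` up to a term of third order in `descentHeight a`. -/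
noncomputable def leadingDensity (a : ℝ) : ℝ :=
  descentHeight a * ((1 + (cos a)⁻¹) * ((cos a)⁻¹ + cos a))

/-- The derivative of `sin a + tan a`; it agrees with `(cos a)⁻¹ + 1` up to a term of
second order in `descentHeight a`. -/
noncomputable def boundaryDensity (a : ℝ) : ℝ := cos a + (cos a)⁻¹ ^ 2

theorem sin_sq_mul_one_add_inv_cos_sq {a : ℝ} (ha : cos a ≠ 0) :
    sin a ^ 2 * (1 + (cos a)⁻¹ ^ 2) = descentHeight a * ((cos a)⁻¹ + cos a) := by
  rw [descentHeight, sin_sq]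
  field_simp
  ring

theorem descentHeight_eq {a : ℝ} (ha : cos a ≠ 0) :
    descentHeight a = (1 - cos a ^ 2) * (cos a)⁻¹ := by
  rw [descentHeight]
  field_simp

theorem descentHeight_nonneg {a : ℝ} (ha : a ∈ Ioo 0 (π / 2)) : 0 ≤ descentHeight a := by
  rw [descentHeight]
  linarith [one_lt_inv_cos_of_mem ha, cos_le_one a]

section Moments

variable {x : ℝ} (hx : 0 < x)

include hx

theorem continuous_descentWeight_mul_descentHeight_pow {g : ℝ → ℝ} (hg : Continuous g) (k : ℕ) :
    Continuous fun a ↦ descentWeight x a * (descentHeight a ^ k * g a) := by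
  refine continuous_descentWeight_mul hx (g := fun a ↦ (1 - cos a ^ 2) ^ k * g a) k
    (by fun_prop) fun a ha ↦ ?_
  rw [descentHeight_eq ha.ne', mul_pow, mul_right_comm]

theorem continuous_descentWeight_mul_momentDensity (k : ℕ) :
    Continuous fun a ↦ descentWeight x a * momentDensity k a := by
  refine continuous_descentWeight_mul hx (g := fun a ↦ (1 - cos a ^ 2) ^ k * (1 + cos a ^ 2))
    (k + 1) (by fun_prop) fun a ha ↦ ?_
  have hsum : (cos a)⁻¹ + cos a = (1 + cos a ^ 2) * (cos a)⁻¹ := by field_simp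
  rw [momentDensity, descentHeight_eq ha.ne', hsum, mul_pow, pow_succ]
  ring

theorem continuous_descentWeight_mul_deriv_descentHeight_pow_mul_sin (k : ℕ) :
    Continuous fun a ↦
      descentWeight x a * (k * momentDensity k a + descentHeight a ^ k * cos a) := by
  refine (((continuous_descentWeight_mul_momentDensity hx k).const_mul (k : ℝ)).add
    (continuous_descentWeight_mul_descentHeight_pow hx continuous_cos k)).congr fun a ↦ ?_
  simp only [Pi.add_apply]
  ring

theorem mul_descentMoment_succ (k : ℕ) :
    x * descentMoment (k + 1) x =
      descentIntegral x fun a ↦ k * momentDensity k a + descentHeight a ^ k * cos a := by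
  refine mul_descentIntegral_eq_descentIntegral_deriv (F := fun a ↦ descentHeight a ^ k * sin a)
    (by simp) (fun a ha ↦ ?_) (fun a ha ↦ ?_)
    (continuous_descentWeight_mul_descentHeight_pow hx continuous_sin k)
    (continuous_descentWeight_mul_deriv_descentHeight_pow_mul_sin hx k)
    (continuous_descentWeight_mul_momentDensity hx _)
  · have hcos := (cos_pos_of_mem ha).ne'
    refine (((hasDerivAt_descentHeight hcos).pow k).mul (hasDerivAt_sin a)).congr_deriv ?_
    rcases k with - | k
    · simp
    · simp only [Pi.pow_apply, Nat.add_sub_cancel, momentDensity]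
      linear_combination ((k + 1 : ℕ) : ℝ) * descentHeight a ^ k *
        sin_sq_mul_one_add_inv_cos_sq hcos
  · rw [momentDensity]
    linear_combination descentHeight a ^ k *
      sin_sq_mul_one_add_inv_cos_sq (cos_pos_of_mem ha).ne'

theorem mul_descentMoment_succ_le (k : ℕ) :
    x * descentMoment (k + 1) x ≤ (k + 1 / 2) * descentMoment k x := by
  rw [mul_descentMoment_succ hx, descentMoment, ← descentIntegral_const_mul]
  refine descentIntegral_mono (continuous_descentWeight_mul_deriv_descentHeight_pow_mul_sin hx k)
    ?_ fun a ha ↦ ?_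
  · simpa only [mul_left_comm] using
      (continuous_descentWeight_mul_momentDensity hx k).const_mul ((k : ℝ) + 1 / 2)
  · have hcos : cos a ≤ 1 / 2 * ((cos a)⁻¹ + cos a) := by
      linarith [one_lt_inv_cos_of_mem ha, cos_le_one a]
    have h := mul_le_mul_of_nonneg_left hcos (pow_nonneg (descentHeight_nonneg ha) k)
    simp only [momentDensity] at h ⊢
    linarith

theorem descentMoment_zero_le : descentMoment 0 x ≤ sinAmplitude x + cosAmplitude x := by
  have h := descentIntegral_mono (continuous_descentWeight_mul_momentDensity hx 0)
    (continuous_descentWeight_mul_affine_inv_cos hx 1 1) fun a _ ↦ by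
      rw [momentDensity, pow_zero, one_mul, one_mul]
      exact add_le_add_right (cos_le_one a) _
  rwa [descentIntegral_mul_inv_cos_add_const hx, one_mul, one_mul] at h

theorem sq_mul_descentMoment_two_le :
    x ^ 2 * descentMoment 2 x ≤ 3 / 4 * (sinAmplitude x + cosAmplitude x) := by
  have h₀ := mul_descentMoment_succ_le hx 0
  have h₁ := mul_le_mul_of_nonneg_left (mul_descentMoment_succ_le hx 1) hx.le
  have h₂ := descentMoment_zero_le hx
  norm_num at h₀ h₁
  linarith

theorem cube_mul_descentMoment_three_le :
    x ^ 3 * descentMoment 3 x ≤ 15 / 8 * (sinAmplitude x + cosAmplitude x) := by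
  have h := mul_le_mul_of_nonneg_left (mul_descentMoment_succ_le hx 2) (sq_nonneg x)
  have h₂ := sq_mul_descentMoment_two_le hx
  norm_num at h
  linarith

end Moments

theorem leadingDensity_mem_Icc {a : ℝ} (ha : 0 < cos a) :
    leadingDensity a ∈ Icc (8 * ((cos a)⁻¹ - 1)) (8 * ((cos a)⁻¹ - 1) + momentDensity 3 a) := by
  simp only [leadingDensity, momentDensity, descentHeight]
  have hc' := cos_le_one a
  generalize cos a = c at ha hc'
  have heq : (c⁻¹ - c) * ((1 + c⁻¹) * (c⁻¹ + c)) =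
      8 * (c⁻¹ - 1) + (c⁻¹ - c) ^ 3 * ((1 + 4 * c + c ^ 2) / (1 + c) ^ 3) := by
    field_simp
    ring
  have hinv : 1 ≤ c⁻¹ := (one_le_inv₀ ha).2 hc'
  have hheight : 0 ≤ (c⁻¹ - c) ^ 3 := pow_nonneg (by linarith) 3
  have hratio : (1 + 4 * c + c ^ 2) / (1 + c) ^ 3 ≤ c⁻¹ + c := by
    rw [div_le_iff₀ (by positivity)]
    calc 1 + 4 * c + c ^ 2 ≤ 1 * (1 + c) ^ 3 + c * (1 + c) ^ 3 := by
          nlinarith [pow_pos ha 2, pow_pos ha 3, pow_pos ha 4]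
      _ ≤ (c⁻¹ + c) * (1 + c) ^ 3 := by rw [← add_mul]; gcongr
  rw [heq]
  exact ⟨le_add_of_nonneg_right (by positivity), by gcongr⟩

theorem boundaryDensity_mem_Icc {a : ℝ} (ha : 0 < cos a) :
    boundaryDensity a ∈ Icc ((cos a)⁻¹ + 1) ((cos a)⁻¹ + 1 + 1 / 2 * momentDensity 2 a) := by
  simp only [boundaryDensity, momentDensity, descentHeight]
  generalize cos a = c at ha
  have heq : c + c⁻¹ ^ 2 = c⁻¹ + 1 + (c⁻¹ - c) ^ 2 * (1 / (1 + c)) := by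
    field_simp
    ring
  have hratio : 1 / (1 + c) ≤ 1 / 2 * (c⁻¹ + c) := by
    rw [div_le_iff₀ (by positivity)]
    field_simp
    nlinarith [sq_nonneg (1 - c), pow_pos ha 2, pow_pos ha 3]
  rw [heq, mul_left_comm (1 / 2)]
  exact ⟨le_add_of_nonneg_right (by positivity), by gcongr⟩

section Asymptotics

variable {x : ℝ} (hx : 0 < x)

include hx

theorem continuous_descentWeight_mul_leadingDensity :
    Continuous fun a ↦ descentWeight x a * leadingDensity a := by
  refine continuous_descentWeight_mul hx
    (g := fun a ↦ (1 - cos a ^ 2) * ((cos a + 1) * (1 + cos a ^ 2))) 3 (by fun_prop) fun a ha ↦ ?_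
  rw [leadingDensity, descentHeight]
  field_simp

theorem continuous_descentWeight_mul_boundaryDensity :
    Continuous fun a ↦ descentWeight x a * boundaryDensity a := by
  refine continuous_descentWeight_mul hx (g := fun a ↦ cos a ^ 3 + 1) 2 (by fun_prop)
    fun a ha ↦ ?_
  rw [boundaryDensity]
  field_simp

theorem mul_descentIntegral_leadingDensity :
    x * descentIntegral x leadingDensity = descentIntegral x boundaryDensity := by
  refine mul_descentIntegral_eq_descentIntegral_deriv (F := fun a ↦ sin a * (1 + (cos a)⁻¹))
    (by simp) (fun a ha ↦ ?_) (fun a ha ↦ ?_) ?_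
    (continuous_descentWeight_mul_boundaryDensity hx)
    (continuous_descentWeight_mul_leadingDensity hx)
  · have hcos := (cos_pos_of_mem ha).ne'
    refine ((hasDerivAt_sin a).mul ((hasDerivAt_inv_cos hcos).const_add 1)).congr_deriv ?_
    rw [boundaryDensity]
    field_simp
    linear_combination sin_sq_add_cos_sq a
  · rw [leadingDensity]
    linear_combination (1 + (cos a)⁻¹) *
      sin_sq_mul_one_add_inv_cos_sq (cos_pos_of_mem ha).ne'
  · refine continuous_descentWeight_mul hx (g := fun a ↦ sin a * (cos a + 1)) 1 (by fun_prop)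
      fun a ha ↦ ?_
    field_simp

theorem descentIntegral_le_of_le_affine_add_momentDensity {f : ℝ → ℝ} {p q r : ℝ} {k : ℕ}
    (hf : Continuous fun a ↦ descentWeight x a * f a)
    (h : ∀ a ∈ Ioo 0 (π / 2), f a ≤ p * (cos a)⁻¹ + q + r * momentDensity k a) :
    descentIntegral x f ≤ p * sinAmplitude x + q * cosAmplitude x + r * descentMoment k x := by
  have haff := continuous_descentWeight_mul_affine_inv_cos hx p q
  have hden := continuous_descentWeight_mul_momentDensity hx k
  have hsum := descentIntegral_const_mul_add_const_mul 1 r haff hden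
  simp only [one_mul, descentIntegral_mul_inv_cos_add_const hx] at hsum
  rw [descentMoment, ← hsum]
  refine descentIntegral_mono hf ((haff.add (hden.const_mul r)).congr fun a ↦ ?_) h
  simp only [Pi.add_apply]
  ring

theorem le_descentIntegral_of_affine_le {f : ℝ → ℝ} {p q : ℝ}
    (hf : Continuous fun a ↦ descentWeight x a * f a)
    (h : ∀ a ∈ Ioo 0 (π / 2), p * (cos a)⁻¹ + q ≤ f a) :
    p * sinAmplitude x + q * cosAmplitude x ≤ descentIntegral x f := by
  rw [← descentIntegral_mul_inv_cos_add_const hx]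
  exact descentIntegral_mono (continuous_descentWeight_mul_affine_inv_cos hx p q) hf h

theorem descentIntegral_boundaryDensity_mem_Icc :
    descentIntegral x boundaryDensity ∈ Icc (sinAmplitude x + cosAmplitude x)
      (sinAmplitude x + cosAmplitude x + 1 / 2 * descentMoment 2 x) := by
  have hcont := continuous_descentWeight_mul_boundaryDensity hx
  have hlo := le_descentIntegral_of_affine_le hx (p := 1) (q := 1) hcont fun a ha ↦ by
    linarith [(boundaryDensity_mem_Icc (cos_pos_of_mem ha)).1]
  have hhi := descentIntegral_le_of_le_affine_add_momentDensity hx (p := 1) (q := 1) (r := 1 / 2)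
    (k := 2) hcont fun a ha ↦ by linarith [(boundaryDensity_mem_Icc (cos_pos_of_mem ha)).2]
  exact ⟨by linarith, by linarith⟩

theorem descentIntegral_leadingDensity_mem_Icc :
    descentIntegral x leadingDensity ∈ Icc (8 * (sinAmplitude x - cosAmplitude x))
      (8 * (sinAmplitude x - cosAmplitude x) + descentMoment 3 x) := by
  have hcont := continuous_descentWeight_mul_leadingDensity hx
  have hlo := le_descentIntegral_of_affine_le hx (p := 8) (q := -8) hcont fun a ha ↦ by
    linarith [(leadingDensity_mem_Icc (cos_pos_of_mem ha)).1]
  have hhi := descentIntegral_le_of_le_affine_add_momentDensity hx (p := 8) (q := -8) (r := 1)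
    (k := 3) hcont fun a ha ↦ by linarith [(leadingDensity_mem_Icc (cos_pos_of_mem ha)).2]
  exact ⟨by linarith, by linarith⟩

theorem eight_mul_amplitude_ratio_mem_Icc :
    8 * x * ((sinAmplitude x - cosAmplitude x) / (sinAmplitude x + cosAmplitude x)) ∈
      Icc (1 - 15 / (8 * x ^ 2)) (1 + 3 / (8 * x ^ 2)) := by
  have hsum : 0 < sinAmplitude x + cosAmplitude x := by
    linarith [cosAmplitude_pos hx, cosAmplitude_lt_sinAmplitude hx]
  obtain ⟨hlead, hlead'⟩ := descentIntegral_leadingDensity_mem_Icc hx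
  obtain ⟨hbdry, hbdry'⟩ := descentIntegral_boundaryDensity_mem_Icc hx
  rw [← mul_descentIntegral_leadingDensity hx] at hbdry hbdry'
  have h₂ := sq_mul_descentMoment_two_le hx
  have h₃ := cube_mul_descentMoment_three_le hx
  rw [← mul_div_assoc]
  constructor
  · rw [le_div_iff₀ hsum, one_sub_mul, div_mul_eq_mul_div, sub_le_comm, le_div_iff₀ (by positivity)]
    have hgap : sinAmplitude x + cosAmplitude x - 8 * x * (sinAmplitude x - cosAmplitude x) ≤
        x * descentMoment 3 x := by linarith [mul_le_mul_of_nonneg_left hlead' hx.le]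
    calc _ ≤ x * descentMoment 3 x * (8 * x ^ 2) := by gcongr
      _ ≤ 15 * (sinAmplitude x + cosAmplitude x) := by linarith
  · rw [div_le_iff₀ hsum, one_add_mul, div_mul_eq_mul_div, ← sub_le_iff_le_add',
      le_div_iff₀ (by positivity)]
    have hgap : 8 * x * (sinAmplitude x - cosAmplitude x) - (sinAmplitude x + cosAmplitude x) ≤
        1 / 2 * descentMoment 2 x := by linarith [mul_le_mul_of_nonneg_left hlead hx.le]
    calc _ ≤ 1 / 2 * descentMoment 2 x * (8 * x ^ 2) := by gcongr
      _ ≤ 3 * (sinAmplitude x + cosAmplitude x) := by linarith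

theorem phase_eq_arctan_add_pi_div_four :
    phase x = arctan ((sinAmplitude x - cosAmplitude x) / (sinAmplitude x + cosAmplitude x)) +
      π / 4 := by
  have hcos := cosAmplitude_pos hx
  have hsum : 0 < sinAmplitude x + cosAmplitude x := by
    linarith [cosAmplitude_lt_sinAmplitude hx]
  rw [← arctan_one, arctan_add, phase]
  · have hnum : (sinAmplitude x - cosAmplitude x) / (sinAmplitude x + cosAmplitude x) + 1 =
        2 * sinAmplitude x / (sinAmplitude x + cosAmplitude x) := by
      field_simp
      ring
    have hden : 1 - (sinAmplitude x - cosAmplitude x) / (sinAmplitude x + cosAmplitude x) * 1 =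
        2 * cosAmplitude x / (sinAmplitude x + cosAmplitude x) := by
      field_simp
      ring
    rw [hnum, hden, div_div_div_cancel_right₀ hsum.ne', mul_div_mul_left _ _ two_ne_zero]
  · rw [mul_one, div_lt_one hsum]
    linarith

end Asymptotics

theorem arctan_le_self {t : ℝ} (ht : 0 ≤ t) : arctan t ≤ t := by
  simpa only [tan_arctan] using le_tan (arctan_nonneg.2 ht) (arctan_lt_pi_div_two t)

theorem sub_pow_three_div_two_le_arctan {t : ℝ} (ht : 0 ≤ t) : t - t ^ 3 / 2 ≤ arctan t := by
  have hnonneg := arctan_nonneg.2 ht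
  have hsq : arctan t ^ 2 ≤ t ^ 2 := pow_le_pow_left₀ hnonneg (arctan_le_self ht) 2
  calc t - t ^ 3 / 2 = t * (1 - t ^ 2 / 2) := by ring
    _ ≤ t * (1 - arctan t ^ 2 / 2) := by gcongr
    _ ≤ t * cos (arctan t) := by gcongr; exact one_sub_sq_div_two_le_cos
    _ = sin (arctan t) := by
      simpa only [tan_arctan] using tan_mul_cos (cos_arctan_pos t).ne'
    _ ≤ arctan t := sin_le hnonneg

theorem abs_phase_sub_le {x : ℝ} (hx : 1 ≤ x) :
    |phase x - π / 4 - 1 / (8 * x)| ≤ 1 / (4 * x ^ 3) := by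
  have hx₀ : 0 < x := by linarith
  obtain ⟨hlo, hhi⟩ := eight_mul_amplitude_ratio_mem_Icc hx₀
  rw [phase_eq_arctan_add_pi_div_four hx₀, add_sub_cancel_right]
  set t := (sinAmplitude x - cosAmplitude x) / (sinAmplitude x + cosAmplitude x)
  have ht : 0 ≤ t := by
    have := cosAmplitude_pos hx₀
    have := cosAmplitude_lt_sinAmplitude hx₀
    exact div_nonneg (by linarith) (by linarith)
  have heq : t = 8 * x * t / (8 * x) := by field_simp
  have hle : t ≤ 1 / (8 * x) + 3 / 64 * (1 / x ^ 3) := by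
    rw [heq, show 1 / (8 * x) + 3 / 64 * (1 / x ^ 3) = (1 + 3 / (8 * x ^ 2)) / (8 * x) by
      field_simp; ring]
    gcongr
  have hge : 1 / (8 * x) - 15 / 64 * (1 / x ^ 3) ≤ t := by
    rw [heq, show 1 / (8 * x) - 15 / 64 * (1 / x ^ 3) = (1 - 15 / (8 * x ^ 2)) / (8 * x) by
      field_simp; ring]
    gcongr
  have hcube : t ^ 3 ≤ 1 / 64 * (1 / x ^ 3) := by
    have hquarter : t ≤ 1 / 4 * (1 / x) := by
      have hinv : 1 / x ^ 3 ≤ 1 / x := one_div_le_one_div_of_le hx₀ (le_self_pow₀ hx (by norm_num))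
      have heighth : 1 / (8 * x) = 1 / 8 * (1 / x) := by ring
      linarith [one_div_pos.2 hx₀]
    calc t ^ 3 ≤ (1 / 4 * (1 / x)) ^ 3 := by gcongr
      _ = 1 / 64 * (1 / x ^ 3) := by ring
  have hquarter : 1 / (4 * x ^ 3) = 1 / 4 * (1 / x ^ 3) := by ring
  rw [hquarter, abs_le]
  constructor
  · linarith [sub_pow_three_div_two_le_arctan ht]
  · have : 0 < 1 / x ^ 3 := by positivity
    linarith [arctan_le_self ht]

theorem phase_sub_le_one_div {x : ℝ} (hx : 1 ≤ x) : phase x - π / 4 ≤ 1 / x := by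
  have hx₀ : 0 < x := by linarith
  have hcube : 1 / x ^ 3 ≤ 1 / x := one_div_le_one_div_of_le hx₀ (le_self_pow₀ hx (by norm_num))
  have heighth : 1 / (8 * x) = 1 / 8 * (1 / x) := by ring
  have hquarter : 1 / (4 * x ^ 3) = 1 / 4 * (1 / x ^ 3) := by ring
  linarith [(abs_le.1 (abs_phase_sub_le hx)).2, one_div_pos.2 hx₀]

theorem abs_sub_sub_le_of_eq_add_phase {x b : ℝ} (hx : 0 < x) (hb : 1 ≤ b)
    (h : x = b - π / 4 + phase x) : |x - b - 1 / (8 * b)| ≤ 3 / 8 * (1 / b ^ 3) := by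
  have hbx : b ≤ x := by linarith [(phase_mem_Ioo hx).1]
  have : 0 < b := by linarith
  have hshift : |1 / (8 * x) - 1 / (8 * b)| ≤ 1 / 8 * (1 / b ^ 3) := by
    rw [abs_sub_comm, show 1 / (8 * b) - 1 / (8 * x) = (x - b) / (8 * (b * x)) by field_simp,
      abs_of_nonneg (div_nonneg (by linarith) (by positivity))]
    calc (x - b) / (8 * (b * x)) ≤ 1 / b / (8 * (b * b)) := by
          gcongr
          calc x - b = phase x - π / 4 := by linarith
            _ ≤ 1 / x := phase_sub_le_one_div (hb.trans hbx)
            _ ≤ 1 / b := by gcongr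
      _ = 1 / 8 * (1 / b ^ 3) := by field_simp
  calc |x - b - 1 / (8 * b)|
      = |(phase x - π / 4 - 1 / (8 * x)) + (1 / (8 * x) - 1 / (8 * b))| := by
        congr 1
        linarith
    _ ≤ 1 / (4 * x ^ 3) + 1 / 8 * (1 / b ^ 3) :=
        (abs_add_le _ _).trans (add_le_add (abs_phase_sub_le (hb.trans hbx)) hshift)
    _ ≤ 1 / (4 * b ^ 3) + 1 / 8 * (1 / b ^ 3) := by gcongr
    _ = 3 / 8 * (1 / b ^ 3) := by ring

end J0

theorem J0_zeros_asymptotics_general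
    (z : ℕ → ℝ)
    (hzpos : ∀ n, 1 ≤ n → 0 < z n)
    (hzmono : ∀ m n, 1 ≤ m → m < n → z m < z n)
    (hzzero : ∀ n, 1 ≤ n → J0 (z n) = 0)
    (hzall : ∀ x : ℝ, 0 < x → J0 x = 0 → ∃ n, 1 ≤ n ∧ z n = x) (n : ℕ) (hn : 1 ≤ n) :
    |z n - π * ((n : ℝ) - 1 / 4) - 1 / (8 * π * ((n : ℝ) - 1 / 4))| ≤ 1 / (n : ℝ) ^ 3 := by
  have hn' : (1 : ℝ) ≤ n := by exact_mod_cast hn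
  have hzn : z n = π * (n - 1 / 4) - π / 4 + J0.phase (z n) := by
    have h := J0.eq_add_phase_of_enumeration hzpos hzmono hzzero hzall (n - 1)
    rw [Nat.sub_add_cancel hn, Nat.cast_pred hn] at h
    linarith
  have hb : (n : ℝ) ≤ π * (n - 1 / 4) := by nlinarith [pi_gt_three]
  rw [mul_assoc 8 π]
  calc _ ≤ 3 / 8 * (1 / (π * ((n : ℝ) - 1 / 4)) ^ 3) :=
        J0.abs_sub_sub_le_of_eq_add_phase (hzpos n hn) (hn'.trans hb) hzn
    _ ≤ 3 / 8 * (1 / (n : ℝ) ^ 3) := by gcongr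
    _ ≤ 1 / (n : ℝ) ^ 3 := mul_le_of_le_one_left (by positivity) (by norm_num)

/-- Asymptotics of the zeros of `J₀`: if `(z_n)_{n ≥ 1}` is the strictly increasing
enumeration of the positive zeros of `J₀`, then for every `κ > 0` there is `C > 0` such that
`|z_n − π(n − 1/4) − 1/(8π(n − 1/4))| ≤ C n^{−(2−κ)}` for every `n ≥ 1`. -/
theorem J0_zeros_asymptotics
    (z : ℕ → ℝ)
    (hzpos : ∀ n, 1 ≤ n → 0 < z n)
    (hzmono : ∀ m n, 1 ≤ m → m < n → z m < z n)
    (hzzero : ∀ n, 1 ≤ n → J0 (z n) = 0)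
    (hzall : ∀ x : ℝ, 0 < x → J0 x = 0 → ∃ n, 1 ≤ n ∧ z n = x) :
    ∀ κ : ℝ, 0 < κ → ∃ C : ℝ, 0 < C ∧ ∀ n : ℕ, 1 ≤ n →
      |z n - Real.pi * ((n : ℝ) - 1 / 4) - 1 / (8 * Real.pi * ((n : ℝ) - 1 / 4))| ≤
        C * (n : ℝ) ^ (-(2 - κ)) := by
  refine fun κ hκ ↦ ⟨1, one_pos, fun n hn ↦ ?_⟩
  calc _ ≤ 1 / (n : ℝ) ^ 3 := J0_zeros_asymptotics_general z hzpos hzmono hzzero hzall n hn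
    _ = (n : ℝ) ^ (-3 : ℝ) := by rw [rpow_neg n.cast_nonneg, one_div]; norm_cast
    _ ≤ (n : ℝ) ^ (-(2 - κ)) :=
      rpow_le_rpow_of_exponent_le (by exact_mod_cast hn) (by linarith)
    _ = 1 * (n : ℝ) ^ (-(2 - κ)) := (one_mul _).symm
end

section
/- For every p ∈ [2, ∞] there exists C > 0 such that for every n ≥ 1, ‖e_n‖_{L^p(Θ)} ≤ C δ_p(n) and ‖e_n′‖_{L^p(Θ)} ≤ C δ_p(n) ‖e_n′‖_{L²(Θ)}, where δ_p(n) = 1 if 2 ≤ p < 4, δ_p(n) = (log(1+n))^{1/4} if p = 4, and δ_p(n) = n^{1/2 − 2/p} if p > 4 (so δ_∞(n) = n^{1/2}). -/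
/-!
The function `u(x) = √x J₀(x)` solves `u'' = -q u` with `q(x) = 1 + 1 / (4x²)` decreasing.
Hence the energy `u'² + q u²` decreases, which gives `J₀(x)², J₁(x)² ≤ 8 / (1 + x)`, while the
amplitude `u² + u'² / q` increases, which keeps `w J₁(w)²` above `1 / 8` at every positive zero `w`
of `J₀`. Since `q ≥ 1`, Sturm comparison with `sin` puts a zero in every interval of length `π`,
whence `z_n ≤ 5 n`. At a zero, `‖J₀(w ·)‖² = ‖J₁(w ·)‖² = π J₁(w)²`, so the eigenfunction of
frequency `Z = z_n`, and its derivative divided by its `L²` norm `Z`, are both at most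
`8 √(Z / (1 + Z r))`. The loss factor `δ_p` is the size of the `L^p` norm of this profile: the
integral of its `p`-th power against `r dr` is dominated by `r ≈ 1` when `p < 4` and by `r ≈ 1 / Z`
when `p > 4`, and all scales in between contribute equally when `p = 4`.
-/

open MeasureTheory
open scoped ENNReal

/-- The measure on `(0,1)` with density `2π r`, so that integrals with respect to it are
integrals over the unit disc `Θ` of radial functions. -/
noncomputable def muTheta : Measure ℝ :=
  (volume.restrict (Set.Ioo (0 : ℝ) 1)).withDensity fun r => ENNReal.ofReal (2 * Real.pi * r)

/-- The `L²(Θ)` norm of `J₀(z_n ·)`. -/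
noncomputable def besselL2 (z : ℕ → ℝ) (n : ℕ) : ℝ :=
  Real.sqrt (2 * Real.pi * ∫ r in (0 : ℝ)..1, (J0 (z n * r)) ^ 2 * r)

/-- The normalized Dirichlet eigenfunction `e_n(r) = J₀(z_n r)/‖J₀(z_n ·)‖_{L²(Θ)}`. -/
noncomputable def efun (z : ℕ → ℝ) (n : ℕ) (r : ℝ) : ℝ :=
  J0 (z n * r) / besselL2 z n

/-- The radial derivative `e_n′(r) = z_n J₀′(z_n r)/‖J₀(z_n ·)‖_{L²(Θ)}`. -/
noncomputable def efun' (z : ℕ → ℝ) (n : ℕ) (r : ℝ) : ℝ :=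
  z n * deriv J0 (z n * r) / besselL2 z n

/-- The loss factor `δ_p(n)`. -/
noncomputable def deltaLp (p : ℝ≥0∞) (n : ℕ) : ℝ :=
  if p < 4 then 1
  else if p = 4 then (Real.log (1 + (n : ℝ))) ^ ((1 : ℝ) / 4)
  else (n : ℝ) ^ ((1 : ℝ) / 2 - 2 / p.toReal)

section BesselClifford

open Nat (factorial)

/-- The Bessel–Clifford function `𝒞ₖ(t) = ∑ⱼ tʲ / (j! (j + k)!)`, through which the Bessel functions
of integer order are expressed: `J_k(x) = (x / 2)ᵏ 𝒞ₖ(-x² / 4)`. -/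
noncomputable def besselClifford (k : ℕ) (t : ℝ) : ℝ :=
  ∑' j : ℕ, t ^ j / ((factorial j : ℝ) * factorial (j + k))

lemma abs_div_factorial_mul_factorial_le (a : ℝ) (j m : ℕ) :
    |a / ((factorial j : ℝ) * factorial m)| ≤ |a| / factorial j := by
  have hm : (1 : ℝ) ≤ factorial m := mod_cast m.factorial_pos
  rw [abs_div, abs_of_pos (by positivity : (0 : ℝ) < factorial j * factorial m)]
  gcongr
  exact le_mul_of_one_le_right (by positivity) hm

lemma hasSum_besselClifford (k : ℕ) (t : ℝ) :
    HasSum (fun j : ℕ ↦ t ^ j / ((factorial j : ℝ) * factorial (j + k))) (besselClifford k t) := by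
  refine (Summable.of_norm_bounded (Real.summable_pow_div_factorial |t|) fun j ↦ ?_).hasSum
  simpa only [Real.norm_eq_abs, abs_pow] using
    abs_div_factorial_mul_factorial_le (t ^ j) j (j + k)

lemma hasSum_deriv_besselClifford (k : ℕ) (t : ℝ) :
    HasSum (fun j : ℕ ↦ j * t ^ (j - 1) / ((factorial j : ℝ) * factorial (j + k)))
      (besselClifford (k + 1) t) := by
  rw [← hasSum_nat_add_iff' 1, Finset.sum_range_one, Nat.cast_zero, zero_mul, zero_div, sub_zero]
  refine (hasSum_besselClifford (k + 1) t).congr_fun fun j ↦ ?_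
  rw [add_tsub_cancel_right, add_right_comm, ← add_assoc, Nat.factorial_succ j]
  push_cast
  field_simp

lemma hasDerivAt_besselClifford (k : ℕ) (t : ℝ) :
    HasDerivAt (besselClifford k) (besselClifford (k + 1) t) t := by
  have hbound : Summable fun j : ℕ ↦ j * (|t| + 1) ^ (j - 1) / (factorial j : ℝ) := by
    rw [← summable_nat_add_iff 1]
    refine (Real.summable_pow_div_factorial (|t| + 1)).congr fun j ↦ ?_
    rw [add_tsub_cancel_right, Nat.factorial_succ]
    push_cast
    field_simp
  have ht : t ∈ Metric.ball (0 : ℝ) (|t| + 1) := by simp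
  rw [← (hasSum_deriv_besselClifford k t).tsum_eq]
  refine hasDerivAt_tsum_of_isPreconnected hbound Metric.isOpen_ball
    (convex_ball _ _).isPreconnected (fun j y _ ↦ (hasDerivAt_pow j y).div_const _)
    (fun j y hy ↦ ?_) ht (hasSum_besselClifford k t).summable ht
  rw [mem_ball_zero_iff, Real.norm_eq_abs] at hy
  refine (abs_div_factorial_mul_factorial_le _ _ _).trans ?_
  rw [abs_mul, abs_pow, Nat.abs_cast]
  gcongr

lemma besselClifford_recurrence (k : ℕ) (t : ℝ) :
    t * besselClifford (k + 2) t + (k + 1) * besselClifford (k + 1) t = besselClifford k t := by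
  refine (((hasSum_deriv_besselClifford (k + 1) t).mul_left t).add
    ((hasSum_besselClifford (k + 1) t).mul_left (k + 1 : ℝ))).unique ?_
  refine (hasSum_besselClifford k t).congr_fun fun j ↦ ?_
  have hpow : t * (j * t ^ (j - 1)) = j * t ^ j := by
    rcases j with _ | j
    · simp
    · rw [add_tsub_cancel_right]
      ring
  rw [mul_div_assoc', hpow, ← add_assoc, Nat.factorial_succ (j + k)]
  push_cast
  field_simp
  ring

end BesselClifford

section BesselFunctions

/-- The Bessel function `J₁` of order one, which is `-J₀'`. -/
noncomputable def J1 (x : ℝ) : ℝ :=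
  x / 2 * besselClifford 1 (-(x ^ 2 / 4))

lemma J0_eq_besselClifford (x : ℝ) : J0 x = besselClifford 0 (-(x ^ 2 / 4)) := by
  refine tsum_congr fun j ↦ ?_
  rw [add_zero, neg_pow (x ^ 2 / 4), pow_mul, show (x / 2) ^ 2 = x ^ 2 / 4 by ring]
  ring

@[simp] lemma J0_zero : J0 0 = 1 := by
  rw [J0, tsum_eq_single 0 fun j hj ↦ by simp [hj]]
  simp

@[simp] lemma J1_zero : J1 0 = 0 := by simp [J1]

lemma hasDerivAt_besselClifford_comp (k : ℕ) (x : ℝ) :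
    HasDerivAt (fun x ↦ besselClifford k (-(x ^ 2 / 4)))
      (-(x / 2) * besselClifford (k + 1) (-(x ^ 2 / 4))) x := by
  have hinner : HasDerivAt (fun x : ℝ ↦ -(x ^ 2 / 4)) (-(x / 2)) x :=
    ((hasDerivAt_pow 2 x).div_const 4).neg.congr_deriv (by push_cast; ring)
  exact ((hasDerivAt_besselClifford k _).comp x hinner).congr_deriv (mul_comm _ _)

lemma hasDerivAt_J0 (x : ℝ) : HasDerivAt J0 (-J1 x) x := by
  rw [funext J0_eq_besselClifford]
  exact (hasDerivAt_besselClifford_comp 0 x).congr_deriv (by rw [J1]; ring)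

lemma hasDerivAt_mul_J1 (x : ℝ) : HasDerivAt (fun x ↦ x * J1 x) (x * J0 x) x := by
  have h := ((hasDerivAt_pow 2 x).div_const 2).mul (hasDerivAt_besselClifford_comp 1 x)
  refine (h.congr_deriv ?_).congr_of_eventuallyEq (.of_forall fun y ↦ ?_)
  · rw [J0_eq_besselClifford, ← besselClifford_recurrence 0]
    push_cast
    ring
  · simp only [J1, Pi.mul_apply]
    ring

lemma hasDerivAt_J1 {x : ℝ} (hx : x ≠ 0) : HasDerivAt J1 (J0 x - J1 x / x) x := by
  refine (((hasDerivAt_mul_J1 x).div (hasDerivAt_id x) hx).congr_deriv ?_).congr_of_eventuallyEq ?_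
  · simp only [id]
    field_simp
  · filter_upwards [eventually_ne_nhds hx] with y hy
    simp only [Pi.div_apply, id]
    field_simp

@[fun_prop] lemma continuous_J0 : Continuous J0 :=
  continuous_iff_continuousAt.2 fun x ↦ (hasDerivAt_J0 x).continuousAt

@[fun_prop] lemma continuous_J1 : Continuous J1 :=
  continuous_iff_continuousAt.2 fun x ↦
    (continuousAt_id.div_const 2).mul (hasDerivAt_besselClifford_comp 1 x).continuousAt

lemma deriv_J0 : deriv J0 = fun x ↦ -J1 x := funext fun x ↦ (hasDerivAt_J0 x).deriv

lemma J0_sq_add_J1_sq_le_one {x : ℝ} (hx : 0 ≤ x) : J0 x ^ 2 + J1 x ^ 2 ≤ 1 := by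
  have hanti : AntitoneOn (fun x ↦ J0 x ^ 2 + J1 x ^ 2) (Set.Ici 0) := by
    refine antitoneOn_of_hasDerivWithinAt_nonpos (f' := fun y ↦ -(2 * J1 y ^ 2 / y))
      (convex_Ici 0) (by fun_prop) (fun y hy ↦ ?_) fun y hy ↦ ?_ <;>
      rw [interior_Ici, Set.mem_Ioi] at hy
    · refine ((((hasDerivAt_J0 y).pow 2).add
        ((hasDerivAt_J1 hy.ne').pow 2)).congr_deriv ?_).hasDerivWithinAt
      push_cast
      ring
    · simp only [Left.neg_nonpos_iff]
      positivity
  simpa using hanti Set.self_mem_Ici hx hx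

lemma abs_J1_le_one {x : ℝ} (hx : 0 ≤ x) : |J1 x| ≤ 1 :=
  abs_le_one_iff_mul_self_le_one.2 <| by nlinarith [J0_sq_add_J1_sq_le_one hx]

lemma one_sub_le_J0 {x : ℝ} (hx : 0 ≤ x) : 1 - x ≤ J0 x := by
  have hmono : MonotoneOn (fun x ↦ J0 x + x) (Set.Ici 0) := by
    refine monotoneOn_of_hasDerivWithinAt_nonneg (f' := fun y ↦ -J1 y + 1) (convex_Ici 0)
      (by fun_prop) (fun y _ ↦ ((hasDerivAt_J0 y).add (hasDerivAt_id y)).hasDerivWithinAt)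
      fun y hy ↦ ?_
    rw [interior_Ici] at hy
    linarith [(abs_le.1 (abs_J1_le_one hy.le)).2]
  have h := hmono Set.self_mem_Ici hx hx
  simp only [J0_zero, add_zero] at h
  linarith

lemma one_le_of_J0_eq_zero {w : ℝ} (hw : 0 ≤ w) (hJ : J0 w = 0) : 1 ≤ w := by
  linarith [one_sub_le_J0 hw]

end BesselFunctions

section Sonin

variable {u u' q q' : ℝ → ℝ} {s : Set ℝ}

lemma hasDerivAt_energy {x : ℝ} (hu : HasDerivAt u (u' x) x)
    (hu' : HasDerivAt u' (-(q x * u x)) x) (hq : HasDerivAt q (q' x) x) :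
    HasDerivAt (fun x ↦ u' x ^ 2 + q x * u x ^ 2) (q' x * u x ^ 2) x :=
  ((hu'.pow 2).add (hq.mul (hu.pow 2))).congr_deriv (by
    simp only [Pi.pow_apply]
    push_cast
    ring)

lemma hasDerivAt_amplitude {x : ℝ} (hu : HasDerivAt u (u' x) x)
    (hu' : HasDerivAt u' (-(q x * u x)) x) (hq : HasDerivAt q (q' x) x) (hq₀ : q x ≠ 0) :
    HasDerivAt (fun x ↦ u x ^ 2 + u' x ^ 2 / q x) (-q' x * (u' x / q x) ^ 2) x :=
  ((hu.pow 2).add ((hu'.pow 2).div hq hq₀)).congr_deriv (by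
    simp only [Pi.pow_apply]
    push_cast
    field_simp
    ring)

lemma antitoneOn_energy (hs : Convex ℝ s) (hu : ∀ x ∈ s, HasDerivAt u (u' x) x)
    (hu' : ∀ x ∈ s, HasDerivAt u' (-(q x * u x)) x) (hq : ∀ x ∈ s, HasDerivAt q (q' x) x)
    (hq' : ∀ x ∈ s, q' x ≤ 0) : AntitoneOn (fun x ↦ u' x ^ 2 + q x * u x ^ 2) s := by
  have hderiv := fun x hx ↦ hasDerivAt_energy (hu x hx) (hu' x hx) (hq x hx)
  exact antitoneOn_of_hasDerivWithinAt_nonpos hs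
    (fun x hx ↦ (hderiv x hx).continuousAt.continuousWithinAt)
    (fun x hx ↦ (hderiv x (interior_subset hx)).hasDerivWithinAt)
    fun x hx ↦ mul_nonpos_of_nonpos_of_nonneg (hq' x (interior_subset hx)) (sq_nonneg _)

lemma monotoneOn_amplitude (hs : Convex ℝ s)
    (hu : ∀ x ∈ s, HasDerivAt u (u' x) x) (hu' : ∀ x ∈ s, HasDerivAt u' (-(q x * u x)) x)
    (hq : ∀ x ∈ s, HasDerivAt q (q' x) x) (hq₀ : ∀ x ∈ s, q x ≠ 0) (hq' : ∀ x ∈ s, q' x ≤ 0) :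
    MonotoneOn (fun x ↦ u x ^ 2 + u' x ^ 2 / q x) s := by
  have hderiv := fun x hx ↦ hasDerivAt_amplitude (hu x hx) (hu' x hx) (hq x hx) (hq₀ x hx)
  exact monotoneOn_of_hasDerivWithinAt_nonneg hs
    (fun x hx ↦ (hderiv x hx).continuousAt.continuousWithinAt)
    (fun x hx ↦ (hderiv x (interior_subset hx)).hasDerivWithinAt)
    fun x hx ↦ mul_nonneg (neg_nonneg.2 (hq' x (interior_subset hx))) (sq_nonneg _)

end Sonin

section Sturm

variable {u u' q : ℝ → ℝ} {a k : ℝ}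

lemma exists_nonpos_of_sq_le (hk : 0 < k)
    (hu : ∀ x ∈ Set.Icc a (a + Real.pi / k), HasDerivAt u (u' x) x)
    (hu' : ∀ x ∈ Set.Icc a (a + Real.pi / k), HasDerivAt u' (-(q x * u x)) x)
    (hq : ∀ x ∈ Set.Icc a (a + Real.pi / k), k ^ 2 ≤ q x) :
    ∃ x ∈ Set.Icc a (a + Real.pi / k), u x ≤ 0 := by
  by_contra! hpos
  have hab : a ≤ a + Real.pi / k := by linarith [div_pos Real.pi_pos hk]
  -- The Wronskian of `u` and `sin (k (x - a))` equals `-k u` at the left endpoint and `k u` at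
  -- the right one.
  have hderiv : ∀ x ∈ Set.Icc a (a + Real.pi / k),
      HasDerivAt (fun x ↦ u' x * Real.sin (k * (x - a)) - u x * (k * Real.cos (k * (x - a))))
        ((k ^ 2 - q x) * u x * Real.sin (k * (x - a))) x := by
    intro x hx
    have hlin : HasDerivAt (fun x ↦ k * (x - a)) k x := by
      simpa using ((hasDerivAt_id x).sub_const a).const_mul k
    exact (((hu' x hx).mul hlin.sin).sub ((hu x hx).mul (hlin.cos.const_mul k))).congr_deriv
      (by ring)
  have hanti := antitoneOn_of_hasDerivWithinAt_nonpos (convex_Icc a (a + Real.pi / k))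
    (fun x hx ↦ (hderiv x hx).continuousAt.continuousWithinAt)
    (fun x hx ↦ (hderiv x (interior_subset hx)).hasDerivWithinAt) fun x hx ↦ by
      have hx' := interior_subset hx
      have hsin : 0 ≤ Real.sin (k * (x - a)) := by
        refine Real.sin_nonneg_of_nonneg_of_le_pi
          (mul_nonneg hk.le (sub_nonneg.2 hx'.1)) ?_
        rw [← le_div_iff₀' hk]
        linarith [hx'.2]
      exact mul_nonpos_of_nonpos_of_nonneg (mul_nonpos_of_nonpos_of_nonneg
        (sub_nonpos.2 (hq x hx')) (hpos x hx').le) hsin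
  have hends := hanti (Set.left_mem_Icc.2 hab) (Set.right_mem_Icc.2 hab) hab
  simp only [add_sub_cancel_left, mul_div_cancel₀ _ hk.ne', Real.sin_pi, Real.cos_pi, sub_self,
    mul_zero, Real.sin_zero, Real.cos_zero] at hends
  linarith [mul_pos (hpos a (Set.left_mem_Icc.2 hab)) hk,
    mul_pos (hpos _ (Set.right_mem_Icc.2 hab)) hk]

lemma exists_zero_of_sq_le (hk : 0 < k)
    (hu : ∀ x ∈ Set.Icc a (a + Real.pi / k), HasDerivAt u (u' x) x)
    (hu' : ∀ x ∈ Set.Icc a (a + Real.pi / k), HasDerivAt u' (-(q x * u x)) x)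
    (hq : ∀ x ∈ Set.Icc a (a + Real.pi / k), k ^ 2 ≤ q x) :
    ∃ x ∈ Set.Icc a (a + Real.pi / k), u x = 0 := by
  have hcont : ContinuousOn u (Set.Icc a (a + Real.pi / k)) :=
    fun x hx ↦ (hu x hx).continuousAt.continuousWithinAt
  obtain ⟨x, hx, hux⟩ := exists_nonpos_of_sq_le hk hu hu' hq
  obtain ⟨y, hy, huy⟩ := exists_nonpos_of_sq_le (u := -u) (u' := -u') hk
    (fun x hx ↦ (hu x hx).neg) (fun x hx ↦ (hu' x hx).neg.congr_deriv (by simp)) hq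
  exact isPreconnected_Icc.intermediate_value hx hy hcont ⟨hux, neg_nonpos.1 huy⟩

end Sturm

section LiouvilleForm

/-- The Liouville normal form `√x J₀(x)` of the Bessel function, which solves
`u'' = -(1 + 1 / (4x²)) u` on `(0, ∞)`. -/
noncomputable def sqrtJ0 (x : ℝ) : ℝ := √x * J0 x

/-- The derivative of `sqrtJ0`. -/
noncomputable def sqrtJ0' (x : ℝ) : ℝ := J0 x / (2 * √x) - √x * J1 x

/-- The potential `1 + 1 / (4x²)` of Bessel's equation of order zero in Liouville normal form. -/
noncomputable def besselPotential (x : ℝ) : ℝ := 1 + 1 / (4 * x ^ 2)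

variable {x : ℝ}

lemma hasDerivAt_sqrtJ0 (hx : 0 < x) : HasDerivAt sqrtJ0 (sqrtJ0' x) x :=
  ((Real.hasDerivAt_sqrt hx.ne').mul (hasDerivAt_J0 x)).congr_deriv (by rw [sqrtJ0']; ring)

lemma hasDerivAt_sqrtJ0' (hx : 0 < x) :
    HasDerivAt sqrtJ0' (-(besselPotential x * sqrtJ0 x)) x := by
  have hsqrt := Real.hasDerivAt_sqrt hx.ne'
  have hpos : 0 < √x := Real.sqrt_pos.2 hx
  refine (((hasDerivAt_J0 x).div (hsqrt.const_mul 2) (by positivity)).sub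
    (hsqrt.mul (hasDerivAt_J1 hx.ne'))).congr_deriv ?_
  rw [besselPotential, sqrtJ0]
  obtain ⟨s, hs, rfl⟩ : ∃ s, 0 < s ∧ x = s ^ 2 := ⟨√x, hpos, (Real.sq_sqrt hx.le).symm⟩
  rw [Real.sqrt_sq hs.le]
  field_simp
  ring

lemma hasDerivAt_besselPotential (hx : x ≠ 0) :
    HasDerivAt besselPotential (-(1 / (2 * x ^ 3))) x := by
  have h := (((hasDerivAt_pow 2 x).const_mul 4).fun_inv (by positivity)).const_add 1
  refine (h.congr_deriv ?_).congr_of_eventuallyEq (.of_forall fun y ↦ ?_)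
  · field_simp
    push_cast
    ring
  · rw [besselPotential, one_div]

lemma one_le_besselPotential (x : ℝ) : 1 ≤ besselPotential x :=
  le_add_of_nonneg_right (by positivity)

lemma antitoneOn_energy_sqrtJ0 :
    AntitoneOn (fun x ↦ sqrtJ0' x ^ 2 + besselPotential x * sqrtJ0 x ^ 2) (Set.Ioi 0) :=
  antitoneOn_energy (convex_Ioi 0) (fun _ ↦ hasDerivAt_sqrtJ0)
    (fun _ ↦ hasDerivAt_sqrtJ0') (fun _ hx ↦ hasDerivAt_besselPotential (ne_of_gt hx))
    fun x (hx : 0 < x) ↦ neg_nonpos.2 (by positivity)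

lemma monotoneOn_amplitude_sqrtJ0 :
    MonotoneOn (fun x ↦ sqrtJ0 x ^ 2 + sqrtJ0' x ^ 2 / besselPotential x) (Set.Ioi 0) :=
  monotoneOn_amplitude (convex_Ioi 0) (fun _ ↦ hasDerivAt_sqrtJ0)
    (fun _ ↦ hasDerivAt_sqrtJ0') (fun _ hx ↦ hasDerivAt_besselPotential (ne_of_gt hx))
    (fun x _ ↦ (one_pos.trans_le (one_le_besselPotential x)).ne')
    fun x (hx : 0 < x) ↦ neg_nonpos.2 (by positivity)

lemma energy_sqrtJ0_eq (hx : 0 < x) :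
    sqrtJ0' x ^ 2 + besselPotential x * sqrtJ0 x ^ 2 =
      x * J0 x ^ 2 + x / 2 * J1 x ^ 2 + x / 2 * (J1 x - J0 x / x) ^ 2 := by
  obtain ⟨s, hs, rfl⟩ : ∃ s, 0 < s ∧ x = s ^ 2 :=
    ⟨√x, Real.sqrt_pos.2 hx, (Real.sq_sqrt hx.le).symm⟩
  rw [sqrtJ0', sqrtJ0, besselPotential, Real.sqrt_sq hs.le]
  field_simp
  ring

lemma mul_J0_sq_add_half_mul_J1_sq_le_two (hx : 1 ≤ x) : x * J0 x ^ 2 + x / 2 * J1 x ^ 2 ≤ 2 := by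
  have hx₀ : 0 < x := one_pos.trans_le hx
  have henergy := antitoneOn_energy_sqrtJ0 (Set.mem_Ioi.2 one_pos) hx₀ hx
  simp only [energy_sqrtJ0_eq one_pos, energy_sqrtJ0_eq hx₀] at henergy
  have hone := J0_sq_add_J1_sq_le_one zero_le_one
  have hrest : 0 ≤ x / 2 * (J1 x - J0 x / x) ^ 2 := by positivity
  nlinarith [sq_nonneg (J1 1 + J0 1), sq_nonneg (J0 1)]

lemma J0_sq_le_and_J1_sq_le (hx : 0 ≤ x) : J0 x ^ 2 ≤ 8 / (1 + x) ∧ J1 x ^ 2 ≤ 8 / (1 + x) := by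
  have hunit := J0_sq_add_J1_sq_le_one hx
  rw [le_div_iff₀ (by positivity), le_div_iff₀ (by positivity)]
  rcases le_total x 1 with h | h
  · constructor <;> nlinarith [sq_nonneg (J0 x), sq_nonneg (J1 x)]
  · have hdecay := mul_J0_sq_add_half_mul_J1_sq_le_two h
    constructor <;> nlinarith [sq_nonneg (J0 x), sq_nonneg (J1 x)]

lemma one_eighth_le_mul_J1_sq_of_J0_eq_zero {w : ℝ} (hw : 0 < w) (hJ : J0 w = 0) :
    1 / 8 ≤ w * J1 w ^ 2 := by
  have hhalf : (1 / 2 : ℝ) ≤ w := by linarith [one_le_of_J0_eq_zero hw.le hJ]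
  calc (1 / 8 : ℝ) ≤ 1 / 2 * J0 (1 / 2) ^ 2 := by
        nlinarith [one_sub_le_J0 (x := 1 / 2) (by norm_num)]
    _ = sqrtJ0 (1 / 2) ^ 2 := by rw [sqrtJ0, mul_pow, Real.sq_sqrt (by norm_num)]
    _ ≤ sqrtJ0 (1 / 2) ^ 2 + sqrtJ0' (1 / 2) ^ 2 / besselPotential (1 / 2) :=
        le_add_of_nonneg_right (div_nonneg (sq_nonneg _)
          (zero_le_one.trans (one_le_besselPotential _)))
    _ ≤ sqrtJ0 w ^ 2 + sqrtJ0' w ^ 2 / besselPotential w :=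
        monotoneOn_amplitude_sqrtJ0 (by norm_num : (0 : ℝ) < 1 / 2) hw hhalf
    _ ≤ sqrtJ0 w ^ 2 + sqrtJ0' w ^ 2 :=
        add_le_add_right (div_le_self (sq_nonneg _) (one_le_besselPotential w)) _
    _ = w * J1 w ^ 2 := by
        rw [sqrtJ0, sqrtJ0', hJ, mul_zero, zero_div, zero_sub, neg_sq, mul_pow,
          Real.sq_sqrt hw.le, zero_pow two_ne_zero, zero_add]

lemma exists_J0_eq_zero_Icc {a : ℝ} (ha : 0 < a) : ∃ x ∈ Set.Icc a (a + Real.pi), J0 x = 0 := by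
  have hpos : ∀ x ∈ Set.Icc a (a + Real.pi / 1), 0 < x := fun x hx ↦ ha.trans_le hx.1
  obtain ⟨x, hx, hux⟩ := exists_zero_of_sq_le one_pos (fun x hx ↦ hasDerivAt_sqrtJ0 (hpos x hx))
    (fun x hx ↦ hasDerivAt_sqrtJ0' (hpos x hx))
    fun x _ ↦ (one_pow 2).trans_le (one_le_besselPotential x)
  refine ⟨x, by simpa using hx, ?_⟩
  exact (mul_eq_zero.1 hux).resolve_left (Real.sqrt_pos.2 (hpos x hx)).ne'

end LiouvilleForm

section ZeroCounting

lemma le_mul_of_enumeration {S : Set ℝ} {L : ℝ} (hS : ∀ a, 0 ≤ a → ∃ x ∈ S, a < x ∧ x ≤ a + L)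
    {z : ℕ → ℝ} (hpos : ∀ n, 1 ≤ n → 0 < z n) (hmono : MonotoneOn z (Set.Ici 1))
    (hsurj : ∀ x ∈ S, 0 < x → ∃ n, 1 ≤ n ∧ z n = x) {n : ℕ} (hn : 1 ≤ n) : z n ≤ L * n := by
  induction n, hn using Nat.le_induction with
  | base =>
    obtain ⟨x, hxS, hx, hxL⟩ := hS 0 le_rfl
    obtain ⟨m, hm, rfl⟩ := hsurj x hxS hx
    simpa using (hmono Set.self_mem_Ici hm hm).trans hxL
  | succ n hn ih =>
    obtain ⟨x, hxS, hx, hxL⟩ := hS (z n) (hpos n hn).le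
    obtain ⟨m, hm, rfl⟩ := hsurj x hxS ((hpos n hn).trans hx)
    have hnm : n < m := lt_of_not_ge fun hmn ↦ (hmono hm hn hmn).not_gt hx
    have hsucc : z (n + 1) ≤ z m := hmono (Nat.le_add_left 1 n) hm hnm
    push_cast
    linarith

lemma besselZero_le_five_mul {z : ℕ → ℝ} (hpos : ∀ n, 1 ≤ n → 0 < z n)
    (hmono : MonotoneOn z (Set.Ici 1))
    (hall : ∀ x, 0 < x → J0 x = 0 → ∃ n, 1 ≤ n ∧ z n = x) {n : ℕ} (hn : 1 ≤ n) :
    z n ≤ 5 * n := by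
  refine le_mul_of_enumeration (S := {x | J0 x = 0}) (fun a ha ↦ ?_) hpos hmono
    (fun x hx hx₀ ↦ hall x hx₀ hx) hn
  obtain ⟨x, hx, hJ⟩ := exists_J0_eq_zero_Icc (by positivity : 0 < a + 1)
  exact ⟨x, hJ, by linarith [hx.1], by linarith [hx.2, Real.pi_lt_four]⟩

end ZeroCounting

section Lommel

variable {w : ℝ}

lemma integral_J0_sq_mul (w : ℝ) :
    ∫ x in 0..w, J0 x ^ 2 * x = w ^ 2 / 2 * (J0 w ^ 2 + J1 w ^ 2) := by
  have hderiv (x : ℝ) : HasDerivAt (fun x ↦ ((x * J0 x) ^ 2 + (x * J1 x) ^ 2) / 2)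
      (J0 x ^ 2 * x) x :=
    (((((hasDerivAt_id' x).mul (hasDerivAt_J0 x)).pow 2).add
      ((hasDerivAt_mul_J1 x).pow 2)).div_const 2).congr_deriv (by
        simp only [Pi.mul_apply]
        push_cast
        ring)
  rw [intervalIntegral.integral_eq_sub_of_hasDerivAt (fun x _ ↦ hderiv x)
    (Continuous.intervalIntegrable (by fun_prop) _ _)]
  ring

lemma integral_J1_sq_mul (w : ℝ) :
    ∫ x in 0..w, J1 x ^ 2 * x = w ^ 2 / 2 * (J0 w ^ 2 + J1 w ^ 2) - J0 w * (w * J1 w) := by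
  have hderiv (x : ℝ) : HasDerivAt (fun x ↦ J0 x * (x * J1 x)) (J0 x ^ 2 * x - J1 x ^ 2 * x) x :=
    ((hasDerivAt_J0 x).mul (hasDerivAt_mul_J1 x)).congr_deriv (by ring)
  have hJ0 : IntervalIntegrable (fun x ↦ J0 x ^ 2 * x) volume 0 w :=
    Continuous.intervalIntegrable (by fun_prop) _ _
  have hJ1 : IntervalIntegrable (fun x ↦ J1 x ^ 2 * x) volume 0 w :=
    Continuous.intervalIntegrable (by fun_prop) _ _
  have hdiff := intervalIntegral.integral_eq_sub_of_hasDerivAt (fun x _ ↦ hderiv x)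
    (hJ0.sub hJ1)
  rw [intervalIntegral.integral_sub hJ0 hJ1, integral_J0_sq_mul, J0_zero, J1_zero] at hdiff
  linarith

lemma integral_sq_comp_mul_left_mul (f : ℝ → ℝ) (hw : w ≠ 0) :
    ∫ r in 0..1, f (w * r) ^ 2 * r = (∫ x in 0..w, f x ^ 2 * x) / w ^ 2 := by
  have hscale := intervalIntegral.integral_comp_mul_left (fun x ↦ f x ^ 2 * x) hw
    (a := 0) (b := 1)
  have hpull : ∀ r, f (w * r) ^ 2 * (w * r) = w * (f (w * r) ^ 2 * r) := fun r ↦ by ring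
  simp only [hpull, intervalIntegral.integral_const_mul, mul_zero, mul_one, smul_eq_mul]
    at hscale
  field_simp at hscale ⊢
  linarith

lemma integral_J0_comp_sq_mul_of_J0_eq_zero (hw : w ≠ 0) (hJ : J0 w = 0) :
    ∫ r in 0..1, J0 (w * r) ^ 2 * r = J1 w ^ 2 / 2 := by
  rw [integral_sq_comp_mul_left_mul J0 hw, integral_J0_sq_mul, hJ]
  field_simp
  ring

lemma integral_J1_comp_sq_mul_of_J0_eq_zero (hw : w ≠ 0) (hJ : J0 w = 0) :
    ∫ r in 0..1, J1 (w * r) ^ 2 * r = J1 w ^ 2 / 2 := by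
  rw [integral_sq_comp_mul_left_mul J1 hw, integral_J1_sq_mul, hJ]
  field_simp
  ring

variable {z : ℕ → ℝ} {n : ℕ}

lemma besselL2_sq (hz : z n ≠ 0) (hJ : J0 (z n) = 0) :
    besselL2 z n ^ 2 = Real.pi * J1 (z n) ^ 2 := by
  rw [besselL2, integral_J0_comp_sq_mul_of_J0_eq_zero hz hJ, Real.sq_sqrt (by positivity)]
  ring

lemma one_le_eight_mul_besselL2_sq (hz : 0 < z n) (hJ : J0 (z n) = 0) :
    1 ≤ 8 * z n * besselL2 z n ^ 2 := by
  rw [besselL2_sq hz.ne' hJ]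
  nlinarith [one_eighth_le_mul_J1_sq_of_J0_eq_zero hz hJ, Real.pi_gt_three]

lemma besselL2_pos (hz : 0 < z n) (hJ : J0 (z n) = 0) : 0 < besselL2 z n := by
  refine (Real.sqrt_nonneg _).lt_of_ne' fun h ↦ ?_
  have := one_le_eight_mul_besselL2_sq hz hJ
  rw [show besselL2 z n = 0 from h] at this
  norm_num at this

end Lommel

section DiscMeasure

lemma ae_muTheta_mem_Ioo : ∀ᵐ r ∂muTheta, r ∈ Set.Ioo (0 : ℝ) 1 :=
  (withDensity_absolutelyContinuous _ _) (ae_restrict_mem measurableSet_Ioo)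

lemma integral_muTheta (f : ℝ → ℝ) :
    ∫ r, f r ∂muTheta = 2 * Real.pi * ∫ r in 0..1, f r * r := by
  rw [muTheta, integral_withDensity_eq_integral_toReal_smul (by fun_prop) (by simp),
    intervalIntegral.integral_of_le zero_le_one, integral_Ioc_eq_integral_Ioo,
    ← integral_const_mul]
  refine setIntegral_congr_fun measurableSet_Ioo fun r hr ↦ ?_
  have hdens : 0 ≤ 2 * Real.pi * r := mul_nonneg Real.two_pi_pos.le hr.1.le
  simp only [ENNReal.toReal_ofReal hdens, smul_eq_mul]
  ring

instance : IsFiniteMeasure muTheta := by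
  have hintegral : Integrable (fun r : ℝ ↦ 2 * Real.pi * r) (volume.restrict (Set.Ioo 0 1)) :=
    (Continuous.integrableOn_Icc (by fun_prop)).mono_set Set.Ioo_subset_Icc_self
  exact isFiniteMeasure_withDensity_ofReal hintegral.2

lemma aestronglyMeasurable_muTheta {f : ℝ → ℝ} (hf : ContinuousOn f (Set.Icc 0 1)) :
    AEStronglyMeasurable f muTheta :=
  ((hf.mono Set.Ioo_subset_Icc_self).aestronglyMeasurable measurableSet_Ioo).mono_ac
    (withDensity_absolutelyContinuous _ _)

lemma memLp_muTheta {f : ℝ → ℝ} (hf : ContinuousOn f (Set.Icc 0 1)) (p : ℝ≥0∞) :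
    MemLp f p muTheta := by
  obtain ⟨C, hC⟩ := isCompact_Icc.exists_bound_of_continuousOn hf
  refine MemLp.of_bound (aestronglyMeasurable_muTheta hf) C ?_
  filter_upwards [ae_muTheta_mem_Ioo] with r hr using hC r (Set.Ioo_subset_Icc_self hr)

lemma eLpNorm_muTheta {f : ℝ → ℝ} (hf : ContinuousOn f (Set.Icc 0 1)) {p : ℝ≥0∞} (hp : p ≠ 0)
    (hp' : p ≠ ∞) : eLpNorm f p muTheta =
      ENNReal.ofReal ((2 * Real.pi * ∫ r in 0..1, |f r| ^ p.toReal * r) ^ p.toReal⁻¹) := by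
  rw [(memLp_muTheta hf p).eLpNorm_eq_integral_rpow_norm hp hp', integral_muTheta]
  simp only [Real.norm_eq_abs]

lemma eLpNorm_efun'_two {z : ℕ → ℝ} {n : ℕ} (hz : 0 < z n) (hJ : J0 (z n) = 0) :
    eLpNorm (efun' z n) 2 muTheta = ENNReal.ofReal (z n) := by
  have hcont : Continuous (efun' z n) := by
    unfold efun'
    rw [deriv_J0]
    fun_prop
  have hsq (r : ℝ) : |efun' z n r| ^ (2 : ℝ) * r =
      z n ^ 2 / besselL2 z n ^ 2 * (J1 (z n * r) ^ 2 * r) := by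
    rw [Real.rpow_two, sq_abs, efun', deriv_J0]
    ring
  have hintegral : 2 * Real.pi * ∫ r in 0..1, |efun' z n r| ^ (2 : ℝ) * r = z n ^ 2 := by
    have hpos := besselL2_pos hz hJ
    have hnorm := besselL2_sq hz.ne' hJ
    simp only [hsq, intervalIntegral.integral_const_mul]
    rw [integral_J1_comp_sq_mul_of_J0_eq_zero hz.ne' hJ]
    field_simp
    linarith
  rw [eLpNorm_muTheta hcont.continuousOn two_ne_zero ENNReal.ofNat_ne_top, ENNReal.toReal_ofNat,
    hintegral, ← one_div, ← Real.sqrt_eq_rpow, Real.sqrt_sq hz.le]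

end DiscMeasure

section ProfileIntegral

variable {Z a s : ℝ}

lemma integral_one_add_mul_rpow (hZ : 0 < Z) (hs : s ≠ -1) :
    ∫ r in 0..1, (1 + Z * r) ^ s = ((1 + Z) ^ (s + 1) - 1) / (Z * (s + 1)) := by
  have hmem : (0 : ℝ) ∉ Set.uIcc 1 (1 + Z) := by
    rw [Set.uIcc_of_le (by linarith)]
    exact fun h ↦ one_pos.not_ge h.1
  rw [intervalIntegral.integral_comp_add_mul (fun x ↦ x ^ s) hZ.ne', mul_zero, mul_one, add_zero,
    integral_rpow (.inr ⟨hs, hmem⟩), Real.one_rpow, smul_eq_mul, ← div_eq_inv_mul, div_div,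
    mul_comm Z]

lemma integral_one_add_mul_inv (hZ : 0 < Z) :
    ∫ r in 0..1, (1 + Z * r)⁻¹ = Real.log (1 + Z) / Z := by
  rw [intervalIntegral.integral_comp_add_mul (fun x ↦ x⁻¹) hZ.ne', mul_zero, mul_one, add_zero,
    integral_inv_of_pos one_pos (by positivity), div_one, smul_eq_mul, ← div_eq_inv_mul]

lemma rpow_mul_integral_eq (hZ : 0 < Z) (ha : a ≠ 2) :
    Z ^ (a - 1) * ∫ r in 0..1, (1 + Z * r) ^ (1 - a) =
      Z ^ (a - 2) * ((1 + Z) ^ (2 - a) - 1) / (2 - a) := by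
  rw [integral_one_add_mul_rpow hZ fun h ↦ ha (by linarith), show a - 1 = a - 2 + 1 by ring,
    Real.rpow_add_one hZ.ne', show 1 - a + 1 = 2 - a by ring]
  have : 2 - a ≠ 0 := sub_ne_zero.2 ha.symm
  field_simp

lemma rpow_mul_integral_le_of_lt_two (hZ : 1 ≤ Z) (ha : a < 2) :
    Z ^ (a - 1) * ∫ r in 0..1, (1 + Z * r) ^ (1 - a) ≤ 2 ^ (2 - a) / (2 - a) := by
  have hZ₀ : 0 < Z := one_pos.trans_le hZ
  have ha' : 0 < 2 - a := sub_pos.2 ha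
  rw [rpow_mul_integral_eq hZ₀ ha.ne]
  refine div_le_div_of_nonneg_right ?_ ha'.le
  calc Z ^ (a - 2) * ((1 + Z) ^ (2 - a) - 1)
      ≤ Z ^ (a - 2) * (2 * Z) ^ (2 - a) := by
        gcongr
        exact (sub_le_self _ zero_le_one).trans (by gcongr; linarith)
    _ = 2 ^ (2 - a) * Z ^ ((a - 2) + (2 - a)) := by
        rw [Real.mul_rpow zero_le_two hZ₀.le, Real.rpow_add hZ₀]
        ring
    _ = 2 ^ (2 - a) := by rw [sub_add_sub_cancel, sub_self, Real.rpow_zero, mul_one]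

lemma rpow_mul_integral_le_of_two_lt (hZ : 0 < Z) (ha : 2 < a) :
    Z ^ (a - 1) * ∫ r in 0..1, (1 + Z * r) ^ (1 - a) ≤ Z ^ (a - 2) / (a - 2) := by
  have ha' : 0 < a - 2 := sub_pos.2 ha
  rw [rpow_mul_integral_eq hZ ha.ne', ← neg_div_neg_eq, neg_sub, ← mul_neg, neg_sub]
  refine div_le_div_of_nonneg_right ?_ ha'.le
  exact mul_le_of_le_one_right (by positivity) (sub_le_self _ (by positivity))

lemma mul_integral_one_add_mul_rpow_neg_one (hZ : 0 < Z) :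
    Z ^ (2 - 1 : ℝ) * ∫ r in 0..1, (1 + Z * r) ^ (1 - 2 : ℝ) = Real.log (1 + Z) := by
  have hexp : (1 - 2 : ℝ) = -1 := by norm_num
  have hinv : Set.EqOn (fun r ↦ (1 + Z * r) ^ (-1 : ℝ)) (fun r ↦ (1 + Z * r)⁻¹)
      (Set.uIcc 0 1) := fun r _ ↦ Real.rpow_neg_one _
  rw [hexp, intervalIntegral.integral_congr hinv, integral_one_add_mul_inv hZ,
    show (2 - 1 : ℝ) = 1 by norm_num, Real.rpow_one, mul_div_cancel₀ _ hZ.ne']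

lemma log_one_add_mul_le {A x : ℝ} (hA : 1 ≤ A) (hx : 0 ≤ x) :
    Real.log (1 + A * x) ≤ A * Real.log (1 + x) := by
  rw [← Real.log_rpow (by positivity)]
  exact Real.log_le_log (by positivity)
    (one_add_mul_self_le_rpow_one_add (by linarith) hA)

end ProfileIntegral

section LossFactor

variable {p : ℝ≥0∞}

lemma deltaLp_nonneg (p : ℝ≥0∞) (n : ℕ) : 0 ≤ deltaLp p n := by
  unfold deltaLp
  split_ifs
  · exact zero_le_one
  · exact Real.rpow_nonneg (Real.log_nonneg (by simp)) _
  · positivity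

lemma deltaLp_top (n : ℕ) : deltaLp ∞ n = √n := by
  simp [deltaLp, Real.sqrt_eq_rpow]

lemma deltaLp_four_rpow (n : ℕ) : deltaLp 4 n ^ (4 : ℝ) = Real.log (1 + n) := by
  rw [deltaLp, if_neg (lt_irrefl _), if_pos rfl,
    ← Real.rpow_mul (Real.log_nonneg (by simp))]
  norm_num

lemma deltaLp_rpow_of_four_lt (h : 4 < p) (hp' : p ≠ ∞) (n : ℕ) :
    deltaLp p n ^ p.toReal = (n : ℝ) ^ (p.toReal / 2 - 2) := by
  have hp₀ : p.toReal ≠ 0 := ENNReal.toReal_ne_zero.2 ⟨ne_zero_of_lt h, hp'⟩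
  rw [deltaLp, if_neg h.not_gt, if_neg h.ne', ← Real.rpow_mul n.cast_nonneg]
  congr 1
  field_simp

lemma exists_rpow_mul_integral_le_deltaLp_rpow (hp' : p ≠ ∞) {A : ℝ} (hA : 1 ≤ A) :
    ∃ K, 0 < K ∧ ∀ (n : ℕ) (Z : ℝ), 1 ≤ Z → Z ≤ A * n →
      Z ^ (p.toReal / 2 - 1) * ∫ r in 0..1, (1 + Z * r) ^ (1 - p.toReal / 2) ≤
        K * deltaLp p n ^ p.toReal := by
  have hA₀ : 0 < A := one_pos.trans_le hA
  rcases lt_trichotomy p 4 with h | rfl | h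
  · have hp₄ : p.toReal < 4 := by
      simpa using (ENNReal.toReal_lt_toReal hp' ENNReal.ofNat_ne_top).2 h
    have hpos : 0 < 2 - p.toReal / 2 := by linarith
    refine ⟨2 ^ (2 - p.toReal / 2) / (2 - p.toReal / 2), by positivity, fun n Z hZ _ ↦ ?_⟩
    rw [deltaLp, if_pos h, Real.one_rpow, mul_one]
    exact rpow_mul_integral_le_of_lt_two hZ (sub_pos.1 hpos)
  · refine ⟨A, hA₀, fun n Z hZ hZn ↦ ?_⟩
    rw [ENNReal.toReal_ofNat, deltaLp_four_rpow, show (4 / 2 : ℝ) = 2 by norm_num,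
      mul_integral_one_add_mul_rpow_neg_one (one_pos.trans_le hZ)]
    exact (Real.log_le_log (by positivity) (by linarith)).trans
      (log_one_add_mul_le hA n.cast_nonneg)
  · have hp₄ : 4 < p.toReal := by
      simpa using (ENNReal.toReal_lt_toReal ENNReal.ofNat_ne_top hp').2 h
    have hpos : 0 < p.toReal / 2 - 2 := by linarith
    refine ⟨A ^ (p.toReal / 2 - 2) / (p.toReal / 2 - 2), by positivity, fun n Z hZ hZn ↦ ?_⟩
    calc Z ^ (p.toReal / 2 - 1) * ∫ r in 0..1, (1 + Z * r) ^ (1 - p.toReal / 2)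
        ≤ Z ^ (p.toReal / 2 - 2) / (p.toReal / 2 - 2) :=
          rpow_mul_integral_le_of_two_lt (one_pos.trans_le hZ) (sub_pos.1 hpos)
      _ ≤ (A * n) ^ (p.toReal / 2 - 2) / (p.toReal / 2 - 2) := by gcongr
      _ = A ^ (p.toReal / 2 - 2) / (p.toReal / 2 - 2) * deltaLp p n ^ p.toReal := by
          rw [Real.mul_rpow hA₀.le n.cast_nonneg, deltaLp_rpow_of_four_lt h hp']
          ring

end LossFactor

section Envelope

/-- The profile `√(Z / (1 + Z r))`: up to a constant, the size at radius `r` of the normalized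
eigenfunction with frequency `Z`. -/
noncomputable def envelope (Z r : ℝ) : ℝ := √(Z / (1 + Z * r))

variable {Z r q : ℝ}

lemma envelope_nonneg (Z r : ℝ) : 0 ≤ envelope Z r := Real.sqrt_nonneg _

lemma continuousOn_envelope (hZ : 0 ≤ Z) : ContinuousOn (envelope Z) (Set.Ici 0) :=
  (continuousOn_const.div (by fun_prop) fun r (hr : 0 ≤ r) ↦ by positivity).sqrt

lemma envelope_le_sqrt (hZ : 0 ≤ Z) (hr : 0 ≤ r) : envelope Z r ≤ √Z :=
  Real.sqrt_le_sqrt (div_le_self hZ (le_add_of_nonneg_right (mul_nonneg hZ hr)))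

lemma envelope_rpow_mul_le (hZ : 0 < Z) (hr : 0 ≤ r) :
    envelope Z r ^ q * r ≤ Z ^ (q / 2 - 1) * (1 + Z * r) ^ (1 - q / 2) := by
  have hpos : 0 < 1 + Z * r := by positivity
  calc envelope Z r ^ q * r = (Z / (1 + Z * r)) ^ (q / 2) * r := by
        rw [envelope, Real.sqrt_eq_rpow, ← Real.rpow_mul (by positivity), one_div_mul_eq_div]
    _ ≤ (Z / (1 + Z * r)) ^ (q / 2) * ((1 + Z * r) / Z) := by
        gcongr
        rw [le_div_iff₀' hZ]
        exact le_add_of_nonneg_left zero_le_one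
    _ = Z ^ (q / 2 - 1) * (1 + Z * r) ^ (1 - q / 2) := by
        rw [Real.div_rpow hZ.le hpos.le, Real.rpow_sub_one hZ.ne', Real.rpow_sub hpos,
          Real.rpow_one]
        ring

lemma integral_envelope_rpow_mul_le (hZ : 0 < Z) (hq : 0 ≤ q) :
    ∫ r in 0..1, envelope Z r ^ q * r ≤
      Z ^ (q / 2 - 1) * ∫ r in 0..1, (1 + Z * r) ^ (1 - q / 2) := by
  rw [← intervalIntegral.integral_const_mul]
  have hIcc : Set.uIcc (0 : ℝ) 1 ⊆ Set.Ici 0 := by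
    rw [Set.uIcc_of_le zero_le_one]
    exact Set.Icc_subset_Ici_self
  refine intervalIntegral.integral_mono_on zero_le_one
    (ContinuousOn.intervalIntegrable ?_) (ContinuousOn.intervalIntegrable ?_)
    fun r hr ↦ envelope_rpow_mul_le hZ hr.1
  · exact (((continuousOn_envelope hZ.le).mono hIcc).rpow_const fun _ _ ↦ .inr hq).mul
      continuousOn_id
  · refine continuousOn_const.mul (ContinuousOn.rpow_const (by fun_prop) fun r hr ↦ .inl ?_)
    have : 0 ≤ r := hIcc hr
    positivity

lemma eLpNorm_envelope_top_le (hZ : 0 ≤ Z) :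
    eLpNorm (envelope Z) ∞ muTheta ≤ ENNReal.ofReal (√Z) := by
  rw [eLpNorm_exponent_top]
  refine eLpNormEssSup_le_of_ae_bound ?_
  filter_upwards [ae_muTheta_mem_Ioo] with r hr
  rw [Real.norm_of_nonneg (envelope_nonneg Z r)]
  exact envelope_le_sqrt hZ hr.1.le

lemma eLpNorm_envelope_le (hZ : 0 < Z) {p : ℝ≥0∞} (hp : p ≠ 0) (hp' : p ≠ ∞) :
    eLpNorm (envelope Z) p muTheta ≤ ENNReal.ofReal ((2 * Real.pi * (Z ^ (p.toReal / 2 - 1) *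
      ∫ r in 0..1, (1 + Z * r) ^ (1 - p.toReal / 2))) ^ p.toReal⁻¹) := by
  rw [eLpNorm_muTheta ((continuousOn_envelope hZ.le).mono Set.Icc_subset_Ici_self) hp hp']
  simp only [abs_of_nonneg (envelope_nonneg Z _)]
  have hnonneg : 0 ≤ ∫ r in 0..1, envelope Z r ^ p.toReal * r :=
    intervalIntegral.integral_nonneg zero_le_one fun r hr ↦
      mul_nonneg (Real.rpow_nonneg (envelope_nonneg Z r) _) hr.1
  gcongr
  exact integral_envelope_rpow_mul_le hZ ENNReal.toReal_nonneg

lemma exists_eLpNorm_envelope_le {p : ℝ≥0∞} (hp : p ≠ 0) {A : ℝ} (hA : 1 ≤ A) :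
    ∃ C, 0 < C ∧ ∀ (n : ℕ) (Z : ℝ), 1 ≤ Z → Z ≤ A * n →
      eLpNorm (envelope Z) p muTheta ≤ ENNReal.ofReal (C * deltaLp p n) := by
  have hA₀ : 0 < A := one_pos.trans_le hA
  rcases eq_or_ne p ∞ with rfl | hp'
  · refine ⟨√A, Real.sqrt_pos.2 hA₀, fun n Z hZ hZn ↦ ?_⟩
    rw [deltaLp_top, ← Real.sqrt_mul hA₀.le]
    exact (eLpNorm_envelope_top_le (zero_le_one.trans hZ)).trans (by gcongr)
  · obtain ⟨K, hK, hintegral⟩ := exists_rpow_mul_integral_le_deltaLp_rpow hp' hA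
    refine ⟨(2 * Real.pi * K) ^ p.toReal⁻¹, by positivity, fun n Z hZ hZn ↦ ?_⟩
    have hZ₀ : 0 < Z := one_pos.trans_le hZ
    have hnonneg : 0 ≤ ∫ r in 0..1, (1 + Z * r) ^ (1 - p.toReal / 2) :=
      intervalIntegral.integral_nonneg zero_le_one fun r hr ↦
        Real.rpow_nonneg (add_nonneg zero_le_one (mul_nonneg hZ₀.le hr.1)) _
    refine (eLpNorm_envelope_le hZ₀ hp hp').trans (ENNReal.ofReal_le_ofReal ?_)
    calc _ ≤ (2 * Real.pi * (K * deltaLp p n ^ p.toReal)) ^ p.toReal⁻¹ :=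
          Real.rpow_le_rpow (by positivity) (by gcongr 2 * Real.pi * ?_; exact hintegral n Z hZ hZn)
            (by positivity)
      _ = (2 * Real.pi * K) ^ p.toReal⁻¹ * deltaLp p n := by
          have hdelta := deltaLp_nonneg p n
          rw [← mul_assoc, Real.mul_rpow (by positivity) (by positivity),
            Real.rpow_rpow_inv hdelta (ENNReal.toReal_pos hp hp').ne']

variable {z : ℕ → ℝ} {n : ℕ}

lemma abs_div_besselL2_le (hz : 0 < z n) (hJ : J0 (z n) = 0) (hr : 0 ≤ r) {y : ℝ}
    (hy : y ^ 2 ≤ 8 / (1 + z n * r)) : |y / besselL2 z n| ≤ 8 * envelope (z n) r := by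
  have hpos := besselL2_pos hz hJ
  have hzr : 0 < 1 + z n * r := by positivity
  refine abs_le_of_sq_le_sq ?_ (mul_nonneg (by norm_num) (envelope_nonneg _ _))
  calc (y / besselL2 z n) ^ 2 = y ^ 2 * (1 / besselL2 z n ^ 2) := by ring
    _ ≤ 8 / (1 + z n * r) * (8 * z n) := by
        refine mul_le_mul hy ?_ (by positivity) (div_nonneg (by norm_num) hzr.le)
        rw [div_le_iff₀ (by positivity)]
        exact one_le_eight_mul_besselL2_sq hz hJ
    _ = (8 * envelope (z n) r) ^ 2 := by
        rw [mul_pow, envelope, Real.sq_sqrt (by positivity)]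
        ring

lemma abs_efun_le (hz : 0 < z n) (hJ : J0 (z n) = 0) (hr : 0 ≤ r) :
    |efun z n r| ≤ 8 * envelope (z n) r :=
  abs_div_besselL2_le hz hJ hr (J0_sq_le_and_J1_sq_le (by positivity)).1

lemma abs_efun'_le (hz : 0 < z n) (hJ : J0 (z n) = 0) (hr : 0 ≤ r) :
    |efun' z n r| ≤ z n * 8 * envelope (z n) r := by
  rw [efun', deriv_J0, mul_neg, neg_div, abs_neg, mul_div_assoc, abs_mul, abs_of_pos hz, mul_assoc]
  gcongr
  exact abs_div_besselL2_le hz hJ hr (J0_sq_le_and_J1_sq_le (by positivity)).2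

lemma eLpNorm_muTheta_le_mul_envelope {f : ℝ → ℝ} {c Z : ℝ}
    (hf : ∀ r, 0 ≤ r → |f r| ≤ c * envelope Z r) (p : ℝ≥0∞) :
    eLpNorm f p muTheta ≤ ENNReal.ofReal c * eLpNorm (envelope Z) p muTheta := by
  refine eLpNorm_le_mul_eLpNorm_of_ae_le_mul ?_ p
  filter_upwards [ae_muTheta_mem_Ioo] with r hr
  rw [Real.norm_eq_abs, Real.norm_of_nonneg (envelope_nonneg Z r)]
  exact hf r hr.1.le

end Envelope

theorem eigenfunction_Lp_bounds_general (p : ℝ≥0∞) (hp : p ≠ 0) (A : ℝ) :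
    ∃ C : ℝ, 0 < C ∧ ∀ (z : ℕ → ℝ) (n : ℕ), 0 < z n → J0 (z n) = 0 → z n ≤ A * n →
      eLpNorm (efun z n) p muTheta ≤ ENNReal.ofReal (C * deltaLp p n) ∧
      eLpNorm (efun' z n) p muTheta ≤
        ENNReal.ofReal (C * deltaLp p n) * eLpNorm (efun' z n) 2 muTheta := by
  obtain ⟨C, hC, henv⟩ := exists_eLpNorm_envelope_le hp (le_max_left 1 A)
  refine ⟨8 * C, by positivity, fun z n hz hJ hzA ↦ ?_⟩
  have hbound : ENNReal.ofReal 8 * eLpNorm (envelope (z n)) p muTheta ≤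
      ENNReal.ofReal (8 * C * deltaLp p n) := by
    rw [mul_assoc, ENNReal.ofReal_mul (by norm_num)]
    gcongr
    exact henv n (z n) (one_le_of_J0_eq_zero hz.le hJ)
      (hzA.trans (by gcongr; exact le_max_right 1 A))
  refine ⟨(eLpNorm_muTheta_le_mul_envelope (fun _ ↦ abs_efun_le hz hJ) p).trans hbound, ?_⟩
  calc eLpNorm (efun' z n) p muTheta
      ≤ ENNReal.ofReal (z n * 8) * eLpNorm (envelope (z n)) p muTheta :=
        eLpNorm_muTheta_le_mul_envelope (fun _ ↦ abs_efun'_le hz hJ) p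
    _ = ENNReal.ofReal 8 * eLpNorm (envelope (z n)) p muTheta * ENNReal.ofReal (z n) := by
        rw [ENNReal.ofReal_mul hz.le, mul_assoc, mul_comm]
    _ ≤ ENNReal.ofReal (8 * C * deltaLp p n) * eLpNorm (efun' z n) 2 muTheta := by
        rw [eLpNorm_efun'_two hz hJ]
        gcongr

/-- `L^p(Θ)` bounds for the eigenfunctions `e_n` and their radial derivatives, for
`p ∈ [2, ∞]` (with `p = ∞` corresponding to the essential supremum). -/
theorem eigenfunction_Lp_bounds
    (z : ℕ → ℝ)
    (hzpos : ∀ n, 1 ≤ n → 0 < z n)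
    (hzmono : ∀ m n, 1 ≤ m → m < n → z m < z n)
    (hzzero : ∀ n, 1 ≤ n → J0 (z n) = 0)
    (hzall : ∀ x : ℝ, 0 < x → J0 x = 0 → ∃ n, 1 ≤ n ∧ z n = x) :
    ∀ p : ℝ≥0∞, 2 ≤ p → ∃ C : ℝ, 0 < C ∧ ∀ n : ℕ, 1 ≤ n →
      eLpNorm (efun z n) p muTheta ≤ ENNReal.ofReal (C * deltaLp p n) ∧
      eLpNorm (efun' z n) p muTheta ≤
        ENNReal.ofReal (C * deltaLp p n) * eLpNorm (efun' z n) 2 muTheta := by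
  intro p hp
  obtain ⟨C, hC, hbound⟩ := eigenfunction_Lp_bounds_general p (two_pos.trans_le hp).ne' 5
  have hmono : MonotoneOn z (Set.Ici 1) :=
    StrictMonoOn.monotoneOn fun m hm n _ hmn ↦ hzmono m n hm hmn
  exact ⟨C, hC, fun n hn ↦ hbound z n (hzpos n hn) (hzzero n hn)
    (besselZero_le_five_mul hzpos hmono hzall hn)⟩
end
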